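/- arXiv:2402.05695 — 3 statements merged into one kernel-verified Lean document; each statement's English description precedes it below -/
import Mathlib

section
/- Fix a type ℓ and a vector of slopes ρ ∈ R^ℓ. Let (b, τ) ∈ B^ℓ × ℝ^m be such that the self-similar IFS generated by F^{(b,τ,ρ)} satisfies the Exponential Separation Condition and s_{(b,τ,ρ)} > 1. Then there exists δ > 0 such that for every (b̂, τ̂) ∈ B^ℓ × ℝ^m with |(b̂, τ̂) − (b, τ)| < δ one has s_{(b̂,τ̂,ρ)} > 1. -/
open Set Filter MeasureTheory

noncomputable section

/-- Composition `f_{i₁} ∘ ⋯ ∘ f_{iₙ}` of a family of maps of `ℝ` along a finite word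
(the empty composition being the identity). -/
def compFam {ι : Type*} (S : ι → ℝ → ℝ) (w : List ι) : ℝ → ℝ :=
  w.foldr (fun k g => S k ∘ g) id

/-- A family of maps of `ℝ` has *no exact overlapping* if for every `n ≥ 1` and all words
`ī, j̄` of length `n`, equality of the compositions `S_ī = S_j̄` (as functions) implies
`ī = j̄`. -/
def NoExactOverlap {ι : Type*} (S : ι → ℝ → ℝ) : Prop :=
  ∀ n : ℕ, 1 ≤ n → ∀ i j : Fin n → ι,
    compFam S (List.ofFn i) = compFam S (List.ofFn j) → i = j

/-- The supporting interval `I` of the system `{f_1, …, f_m}`:  if the maps have a common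
fixed point `φ` (i.e. the attractor is the single point `φ`) it is `[φ - 1/2, φ + 1/2]`;
otherwise it is the smallest nonempty compact interval sent into itself by all the maps,
i.e. the intersection of all such intervals. -/
def suppInt {m : ℕ} (f : Fin m → ℝ → ℝ) : Set ℝ :=
  haveI := Classical.propDecidable (∃ φ : ℝ, ∀ k, f k φ = φ)
  if h : ∃ φ : ℝ, ∀ k, f k φ = φ then
    Set.Icc (h.choose - 1 / 2) (h.choose + 1 / 2)
  else
    ⋂₀ {J : Set ℝ | J.Nonempty ∧ (∃ a b : ℝ, J = Set.Icc a b) ∧ ∀ k, f k '' J ⊆ J}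

/-- The natural pressure function
`Φ(s) = limsup_{n → ∞} (1/n) log ∑_{(i₁,…,iₙ)} |I_{i₁…iₙ}|ˢ`. -/
def pressure {m : ℕ} (f : Fin m → ℝ → ℝ) (s : ℝ) : ℝ :=
  Filter.limsup
    (fun n : ℕ =>
      (n : ℝ)⁻¹ * Real.log (∑ w : Fin n → Fin m,
        Metric.diam (compFam f (List.ofFn w) '' suppInt f) ^ s))
    Filter.atTop

/-- The index of the interval of linearity (determined by the breaking points `b`) in which
the point `u` lies: the number of breaking points lying below `u`. -/
def slopeIdx {lk : ℕ} (b : Fin lk → ℝ) (u : ℝ) : Fin (lk + 1) :=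
  ⟨(Finset.univ.filter fun j : Fin lk => b j < u).card,
   Nat.lt_succ_of_le (le_trans (Finset.card_filter_le _ _) (by simp))⟩

/-- The continuous piecewise linear function with breaking points `b`, slope `ρ i` on the
`i`-th interval of linearity, and value `τ` at `0`:  `x ↦ τ + ∫_0^x (slope at u) du`. -/
def plFun {lk : ℕ} (b : Fin lk → ℝ) (ρ : Fin (lk + 1) → ℝ) (τ : ℝ) (x : ℝ) : ℝ :=
  τ + ∫ u in (0 : ℝ)..x, ρ (slopeIdx b u)

variable (m : ℕ) (l : Fin m → ℕ)

/-- The space `ℝ^L` of breaking point data of type `ℓ`. -/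
abbrev BSpace := (k : Fin m) → Fin (l k) → ℝ

/-- The space `ℝ^{L+m}` of slope data of type `ℓ`. -/
abbrev RSpace := (k : Fin m) → Fin (l k + 1) → ℝ

/-- The full parameter space `ℝ^L × ℝ^m × ℝ^{L+m}` of CPLIFSs of type `ℓ`:
breaking points, vertical translations and slopes. -/
abbrev Param := BSpace m l × (Fin m → ℝ) × RSpace m l

/-- The family of piecewise linear maps `{f_1, …, f_m}` determined by a parameter
vector `(b, τ, ρ)`. -/
def paramFun (p : Param m l) : Fin m → ℝ → ℝ :=
  fun k => plFun (p.1 k) (p.2.2 k) (p.2.1 k)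

/-- The set `Γ^ℓ` of admissible parameter vectors: breaking points strictly increasing,
slopes nonzero of modulus `< 1`, and consecutive slopes of each map distinct. -/
def Gamma : Set (Param m l) :=
  {p | (∀ k, StrictMono (p.1 k)) ∧
       (∀ k i, p.2.2 k i ≠ 0 ∧ |p.2.2 k i| < 1) ∧
       (∀ k (i : Fin (l k)), p.2.2 k i.castSucc ≠ p.2.2 k i.succ)}

/-- The natural dimension of the CPLIFS with parameter vector `p`: the (unique) nonnegative
zero of the natural pressure function, i.e. `inf {s ≥ 0 | Φ_p(s) ≤ 0}`. -/
def natDim (p : Param m l) : ℝ :=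
  sInf {s : ℝ | 0 ≤ s ∧ pressure (paramFun m l p) s ≤ 0}

/-- A family of affine contractions `x ↦ r p * x + t p` satisfies the *Exponential
Separation Condition* if there are `c > 0` and a strictly increasing sequence `(n_L)` of
naturals such that for every `L` and all distinct words `ī ≠ j̄` of length `n_L`, the
compositions `S_ī` and `S_j̄` either have different slopes or satisfy
`|S_ī(0) - S_j̄(0)| ≥ c ^ (n_L)`. -/
def ESCfam {ι : Type*} (r t : ι → ℝ) : Prop :=
  ∃ c : ℝ, 0 < c ∧ ∃ nl : ℕ → ℕ, StrictMono nl ∧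
    ∀ L : ℕ, ∀ i j : Fin (nl L) → ι, i ≠ j →
      ((∏ q, r (i q)) ≠ ∏ q, r (j q)) ∨
      c ^ nl L ≤
        |compFam (fun p x => r p * x + t p) (List.ofFn i) 0 -
         compFam (fun p x => r p * x + t p) (List.ofFn j) 0|

/-! helper lemmas: sums over words -/

/-- sum over all words of length `n` -/
def wsum {κ : Type} [Fintype κ] : ℕ → (List κ → ℝ) → ℝ
  | 0, g => g []
  | n + 1, g => ∑ k, wsum n (fun w => g (k :: w))

theorem wsum_eq {κ : Type} [Fintype κ] (n : ℕ) (g : List κ → ℝ) :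
    wsum n g = ∑ w : Fin n → κ, g (List.ofFn w) := by
  induction n generalizing g with
  | zero => simp [wsum]
  | succ n ih =>
    rw [wsum, ← (Fin.consEquiv (fun _ => κ)).sum_comp, Fintype.sum_prod_type]
    refine Finset.sum_congr rfl fun k _ => ?_
    rw [ih]
    refine Finset.sum_congr rfl fun w _ => ?_
    simp [Fin.consEquiv]

theorem wsum_append {κ : Type} [Fintype κ] (p q : ℕ) (g : List κ → ℝ) :
    wsum (p + q) g = wsum p (fun u => wsum q (fun v => g (u ++ v))) := by
  induction p generalizing g with
  | zero => simp [wsum]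
  | succ n ih =>
    rw [Nat.succ_add_eq_add_succ, Nat.add_succ, wsum, wsum]
    refine Finset.sum_congr rfl fun k _ => ?_
    rw [ih]; rfl

theorem wsum_mono {κ : Type} [Fintype κ] (n : ℕ) (g h : List κ → ℝ)
    (H : ∀ w, w.length = n → g w ≤ h w) : wsum n g ≤ wsum n h := by
  induction n generalizing g h with
  | zero => simpa [wsum] using H [] rfl
  | succ n ih =>
    refine Finset.sum_le_sum fun k _ => ih _ _ fun w hw => H _ (by simp [hw])

theorem wsum_congr {κ : Type} [Fintype κ] (n : ℕ) (g h : List κ → ℝ)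
    (H : ∀ w, w.length = n → g w = h w) : wsum n g = wsum n h :=
  le_antisymm (wsum_mono _ _ _ fun w hw => (H w hw).le)
    (wsum_mono _ _ _ fun w hw => (H w hw).ge)

theorem wsum_mul {κ : Type} [Fintype κ] (n : ℕ) (g : List κ → ℝ) (c : ℝ) :
    wsum n (fun w => g w * c) = wsum n g * c := by
  simp only [wsum_eq, Finset.sum_mul]

theorem wsum_mul_left {κ : Type} [Fintype κ] (n : ℕ) (g : List κ → ℝ) (c : ℝ) :
    wsum n (fun w => c * g w) = c * wsum n g := by
  simp only [wsum_eq, Finset.mul_sum]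

theorem wsum_add {κ : Type} [Fintype κ] (n : ℕ) (g h : List κ → ℝ) :
    wsum n (fun w => g w + h w) = wsum n g + wsum n h := by
  simp only [wsum_eq, Finset.sum_add_distrib]

theorem wsum_sum {κ : Type} [Fintype κ] {σ : Type} (s : Finset σ) (n : ℕ)
    (g : σ → List κ → ℝ) :
    wsum n (fun w => ∑ i ∈ s, g i w) = ∑ i ∈ s, wsum n (g i) := by
  simp only [wsum_eq]; rw [Finset.sum_comm]

theorem wsum_const {κ : Type} [Fintype κ] (n : ℕ) (c : ℝ) :
    wsum (κ := κ) n (fun _ => c) = (Fintype.card κ : ℝ) ^ n * c := by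
  simp [wsum_eq]

theorem wsum_nonneg {κ : Type} [Fintype κ] (n : ℕ) (g : List κ → ℝ)
    (H : ∀ w, w.length = n → 0 ≤ g w) : 0 ≤ wsum n g := by
  have := wsum_mono n (fun _ => 0) g H
  simpa [wsum_const] using this

theorem wsum_unique {κ : Type} [Fintype κ] (n : ℕ) (g : List κ → ℝ) (C : ℝ) (hC : 0 ≤ C)
    (P : List κ → Prop) (h0 : ∀ w, w.length = n → ¬ P w → g w = 0)
    (h1 : ∀ w, w.length = n → P w → g w ≤ C)
    (hu : ∀ w w', w.length = n → w'.length = n → P w → P w' → w = w') :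
    wsum n g ≤ C := by
  classical
  rw [wsum_eq]
  by_cases hP : ∃ w : Fin n → κ, P (List.ofFn w)
  · obtain ⟨w, hw⟩ := hP
    rw [Finset.sum_eq_single w]
    · exact h1 _ (by simp) hw
    · intro w' _ hne
      refine h0 _ (by simp) fun h => hne ?_
      exact List.ofFn_injective (hu _ _ (by simp) (by simp) h hw)
    · simp
  · push Not at hP
    rw [Finset.sum_eq_zero fun w _ => h0 _ (by simp) (hP w)]
    exact hC

theorem compFam_append {ι : Type*} (S : ι → ℝ → ℝ) (u v : List ι) (x : ℝ) :
    compFam S (u ++ v) x = compFam S u (compFam S v x) := by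
  induction u with
  | nil => simp [compFam]
  | cons k u ih =>
    have : ∀ w : List ι, compFam S (k :: w) = S k ∘ compFam S w := fun w => rfl
    rw [List.cons_append, this, this]; simp [ih]

theorem compFam_cons {ι : Type*} (S : ι → ℝ → ℝ) (k : ι) (v : List ι) (x : ℝ) :
    compFam S (k :: v) x = S k (compFam S v x) := rfl

theorem compFam_cons' {ι : Type*} (S : ι → ℝ → ℝ) (k : ι) (v : List ι) :
    compFam S (k :: v) = S k ∘ compFam S v := rfl

theorem compFam_image_append {ι : Type*} (S : ι → ℝ → ℝ) (u v : List ι) (U : Set ℝ) :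
    compFam S (u ++ v) '' U = compFam S u '' (compFam S v '' U) := by
  rw [Set.image_image]; simp only [compFam_append]

theorem compFam_dist {ι : Type*} (S : ι → ℝ → ℝ) {r : ℝ} (hr : 0 ≤ r)
    (hS : ∀ k x y, |S k x - S k y| ≤ r * |x - y|) (w : List ι) (x y : ℝ) :
    |compFam S w x - compFam S w y| ≤ r ^ w.length * |x - y| := by
  induction w with
  | nil => simp [compFam]
  | cons k w ih =>
    rw [compFam_cons, compFam_cons, List.length_cons, pow_succ']
    refine (hS _ _ _).trans ?_
    rw [mul_assoc]
    exact mul_le_mul_of_nonneg_left ih hr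

theorem compFam_continuous {ι : Type*} (S : ι → ℝ → ℝ) {r : ℝ} (hr : 0 ≤ r)
    (hS : ∀ k x y, |S k x - S k y| ≤ r * |x - y|) (w : List ι) :
    Continuous (compFam S w) := by
  have : LipschitzWith (Real.toNNReal (r ^ w.length)) (compFam S w) := by
    refine LipschitzWith.of_dist_le_mul fun x y => ?_
    rw [Real.coe_toNNReal _ (by positivity)]
    exact compFam_dist S hr hS w x y
  exact this.continuous

theorem compFam_diam {ι : Type*} (S : ι → ℝ → ℝ) {r : ℝ} (hr : 0 ≤ r)
    (hS : ∀ k x y, |S k x - S k y| ≤ r * |x - y|) (w : List ι) (U : Set ℝ)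
    (hU : Bornology.IsBounded U) :
    Metric.diam (compFam S w '' U) ≤ r ^ w.length * Metric.diam U := by
  refine Metric.diam_le_of_forall_dist_le (mul_nonneg (by positivity) Metric.diam_nonneg) ?_
  rintro _ ⟨x, hx, rfl⟩ _ ⟨y, hy, rfl⟩
  refine (compFam_dist S hr hS w x y).trans ?_
  exact mul_le_mul_of_nonneg_left (Metric.dist_le_diam_of_mem hU hx hy) (by positivity)

theorem compFam_track {ι : Type*} (S S' : ι → ℝ → ℝ) {r d D : ℝ} (hr : 0 ≤ r)
    (hS : ∀ k x y, |S k x - S k y| ≤ r * |x - y|)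
    (hd : ∀ k x, |S k x - S' k x| ≤ d) (hD : d ≤ (1 - r) * D)
    (w : List ι) (x x' : ℝ) (hx : |x - x'| ≤ D) :
    |compFam S w x - compFam S' w x'| ≤ D := by
  induction w with
  | nil => simpa [compFam] using hx
  | cons k w ih =>
    rw [compFam_cons, compFam_cons]
    have h1 := hS k (compFam S w x) (compFam S' w x')
    have h2 := hd k (compFam S' w x')
    have h3 := mul_le_mul_of_nonneg_left ih hr
    have := abs_sub_le (S k (compFam S w x)) (S k (compFam S' w x')) (S' k (compFam S' w x'))
    linarith

/-! hits -/

open Classical in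
/-- number of visits of the orbit of `x` along `w` to the `η`-neighbourhood of `β` -/
def hits {ι : Type*} (S : ι → ℝ → ℝ) (β η : ℝ) : List ι → ℝ → ℕ
  | [], _ => 0
  | _ :: w, x => hits S β η w x + if |compFam S w x - β| ≤ η then 1 else 0

theorem hits_append {ι : Type*} (S : ι → ℝ → ℝ) (β η : ℝ) (u v : List ι) (x : ℝ) :
    hits S β η (u ++ v) x = hits S β η v x + hits S β η u (compFam S v x) := by
  induction u with
  | nil => simp [hits]
  | cons k u ih =>
    rw [List.cons_append, hits, hits, ih, compFam_append]; ring

theorem hits_le {ι : Type*} (S : ι → ℝ → ℝ) (β η : ℝ) (w : List ι) (x : ℝ) :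
    hits S β η w x ≤ w.length := by
  induction w with
  | nil => simp [hits]
  | cons k u ih => rw [hits, List.length_cons]; split_ifs <;> omega

/-- interval inside `I` -/
def Ivl (I U : Set ℝ) : Prop := IsCompact U ∧ IsConnected U ∧ U ⊆ I

theorem Ivl.image {ι : Type*} {S : ι → ℝ → ℝ} {I U : Set ℝ} {r : ℝ} (hr : 0 ≤ r)
    (hS : ∀ k x y, |S k x - S k y| ≤ r * |x - y|) (hI : ∀ k, S k '' I ⊆ I)
    (hU : Ivl I U) (w : List ι) : Ivl I (compFam S w '' U) := by
  have hc := compFam_continuous S hr hS w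
  refine ⟨hU.1.image hc, hU.2.1.image _ hc.continuousOn, ?_⟩
  have : compFam S w '' I ⊆ I := by
    induction w with
    | nil => simp [compFam]
    | cons k w ih =>
      rw [compFam_cons', Set.image_comp]
      exact (Set.image_mono (ih (compFam_continuous S hr hS w))).trans (hI k)
  exact (Set.image_mono hU.2.2).trans this

section
variable {ι : Type*} {S : ι → ℝ → ℝ} {β η r : ℝ} {N : ℕ}

theorem hits_decomp_zero (hr : 0 ≤ r) (hr1 : r ≤ 1)
    (hS : ∀ k x y, |S k x - S k y| ≤ r * |x - y|)
    (hη : ∀ w : List ι, w.length ≤ N → |compFam S w β - β| ≤ 2 * η → compFam S w β = β)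
    (x : ℝ) (hx : |x - β| ≤ η) (w : List ι) (hw : w.length ≤ N) :
    ∃ u v, w = u ++ v ∧ compFam S v β = β ∧ hits S β η w x ≤ v.length + 1 := by
  induction w with
  | nil => exact ⟨[], [], rfl, rfl, by simp [hits]⟩
  | cons k w ih =>
    simp only [List.length_cons] at hw
    by_cases h : |compFam S w x - β| ≤ η
    · refine ⟨[k], w, rfl, ?_, ?_⟩
      · apply hη _ (by omega)
        have h1 := compFam_dist S hr hS w β x
        have h2 : r ^ w.length * |β - x| ≤ 1 * |β - x| :=
          mul_le_mul_of_nonneg_right (pow_le_one₀ hr hr1) (abs_nonneg _)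
        rw [abs_sub_comm β x] at h2 h1
        have := abs_sub_le (compFam S w β) (compFam S w x) β
        linarith
      · simpa using hits_le S β η (k :: w) x
    · obtain ⟨u, v, rfl, h1, h2⟩ := ih (by omega)
      refine ⟨k :: u, v, rfl, h1, ?_⟩
      rw [hits, if_neg h]; simpa using h2

theorem hits_decomp (hr : 0 ≤ r) (hr1 : r ≤ 1)
    (hS : ∀ k x y, |S k x - S k y| ≤ r * |x - y|)
    (hη : ∀ w : List ι, w.length ≤ N → |compFam S w β - β| ≤ 2 * η → compFam S w β = β)
    (w : List ι) (x : ℝ) (hw : w.length ≤ N) :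
    hits S β η w x = 0 ∨
    ∃ u v q, w = u ++ (v ++ q) ∧ compFam S v β = β ∧ hits S β η w x ≤ v.length + 1 := by
  induction w using List.reverseRecOn generalizing x with
  | nil => left; simp [hits]
  | append_singleton w k ih =>
    by_cases h : |x - β| ≤ η
    · obtain ⟨u, v, h1, h2, h3⟩ := hits_decomp_zero hr hr1 hS hη x h _ hw
      exact Or.inr ⟨u, v, [], by simpa using h1, h2, h3⟩
    · have e : hits S β η (w ++ [k]) x = hits S β η w (S k x) := by
        rw [hits_append]
        have : compFam S [k] x = S k x := rfl
        have h' : compFam S [] x = x := rfl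
        rw [this]; simp [hits, h', h]
      simp only [List.length_append, List.length_singleton] at hw
      rcases ih (S k x) (by omega) with h0 | ⟨u, v, q, h1, h2, h3⟩
      · left; rw [e, h0]
      · right; exact ⟨u, v, q ++ [k], by rw [h1]; simp, h2, e ▸ h3⟩

end

theorem block_bound {κ : Type} [Fintype κ] {S : κ → ℝ → ℝ} {β η r : ℝ} {N : ℕ} {I : Set ℝ}
    (hr : 0 < r) (hr1 : r ≤ 1)
    (hS : ∀ k x y, |S k x - S k y| ≤ r * |x - y|) (hI : ∀ k, S k '' I ⊆ I)
    (hη : ∀ w : List κ, w.length ≤ N → |compFam S w β - β| ≤ 2 * η → compFam S w β = β)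
    (huniq : ∀ u v : List κ, u.length = v.length → compFam S u β = β → compFam S v β = β → u = v)
    {a : ℕ → ℝ} (ha0 : ∀ n, 0 ≤ a n)
    (ha : ∀ n U, Ivl I U → wsum n (fun w => Metric.diam (compFam S w '' U)) ≤ a n * Metric.diam U)
    {C E : ℝ} (hC : 0 ≤ C) (hE : 1 ≤ E) (haC : ∀ n, a n ≤ C * E ^ n)
    (x : ℝ) (U : Set ℝ) (hU : Ivl I U) :
    wsum N (fun w => Metric.diam (compFam S w '' U) * r⁻¹ ^ hits S β η w x) ≤
      (C + (N + 1) ^ 2 * (r⁻¹ * C ^ 2)) * E ^ N * Metric.diam U := by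
  classical
  have hz : 1 ≤ r⁻¹ := (one_le_inv₀ hr).2 hr1
  have hd : ∀ V : Set ℝ, 0 ≤ Metric.diam V := fun V => Metric.diam_nonneg
  set ind : ℕ → ℕ → List κ → ℝ := fun p t w =>
    if p + t ≤ N ∧ compFam S ((w.drop p).take t) β = β then r⁻¹ ^ (t + 1) else 0 with hind
  have ind0 : ∀ p t w, 0 ≤ ind p t w := by
    intro p t w; simp only [hind]; split_ifs <;> positivity
  have h1 : wsum N (fun w => Metric.diam (compFam S w '' U) * r⁻¹ ^ hits S β η w x) ≤
      wsum N (fun w => Metric.diam (compFam S w '' U) +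
        ∑ p ∈ Finset.range (N + 1), ∑ t ∈ Finset.range (N + 1),
          Metric.diam (compFam S w '' U) * ind p t w) := by
    refine wsum_mono _ _ _ fun w hw => ?_
    have hs : ∀ p ∈ Finset.range (N + 1), 0 ≤ ∑ t ∈ Finset.range (N + 1),
          Metric.diam (compFam S w '' U) * ind p t w := fun p _ =>
        Finset.sum_nonneg fun t _ => mul_nonneg (hd _) (ind0 _ _ _)
    rcases hits_decomp hr.le hr1 hS hη w x hw.le with h0 | ⟨u, v, q, e, h2, h3⟩
    · rw [h0, pow_zero, mul_one]
      have := Finset.sum_nonneg hs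
      linarith
    · have hl : u.length + (v.length + q.length) = N := by rw [← hw, e]; simp
      have g1 : Metric.diam (compFam S w '' U) * r⁻¹ ^ hits S β η w x ≤
          Metric.diam (compFam S w '' U) * ind u.length v.length w := by
        refine mul_le_mul_of_nonneg_left ?_ (hd _)
        have : ind u.length v.length w = r⁻¹ ^ (v.length + 1) := by
          simp only [hind]
          rw [if_pos]
          refine ⟨by omega, ?_⟩
          rw [e]; simpa using h2
        rw [this]
        exact pow_le_pow_right₀ hz h3
      have g2 := Finset.single_le_sum (f := fun t => Metric.diam (compFam S w '' U) * ind u.length t w)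
        (fun t _ => mul_nonneg (hd _) (ind0 _ _ _)) (Finset.mem_range.2 (show v.length < N + 1 by omega))
      have g3 := Finset.single_le_sum hs (Finset.mem_range.2 (show u.length < N + 1 by omega))
      have := hd (compFam S w '' U)
      linarith
  refine h1.trans ?_
  rw [wsum_add, wsum_sum]
  simp only [wsum_sum]
  have h2 : ∀ p ∈ Finset.range (N + 1), ∀ t ∈ Finset.range (N + 1),
      wsum N (fun w => Metric.diam (compFam S w '' U) * ind p t w) ≤
        r⁻¹ * C ^ 2 * E ^ N * Metric.diam U := by
    intro p _ t _
    have hpos : 0 ≤ r⁻¹ * C ^ 2 * E ^ N * Metric.diam U := by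
      have := hd U
      positivity
    by_cases hpt : p + t ≤ N
    swap
    · have : wsum N (fun w => Metric.diam (compFam S w '' U) * ind p t w) = wsum (κ := κ) N (fun _ => 0) := by
        refine wsum_congr _ _ _ fun w _ => ?_
        simp [hind, hpt]
      rw [this, wsum_const]; simpa using hpos
    obtain ⟨s, hs⟩ := Nat.exists_eq_add_of_le hpt
    have e1 : wsum N (fun w => Metric.diam (compFam S w '' U) * ind p t w) =
        wsum t (fun v => wsum s (fun q => wsum p (fun u =>
          Metric.diam (compFam S u '' (compFam S v '' (compFam S q '' U))) *
            (if compFam S v β = β then r⁻¹ ^ (t + 1) else 0)))) := by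
      have hN : N = p + (t + s) := by omega
      conv_lhs => rw [hN]
      rw [wsum_append]
      have : wsum p (fun u => wsum (t + s) (fun v =>
          Metric.diam (compFam S (u ++ v) '' U) * ind p t (u ++ v))) =
        wsum p (fun u => wsum t (fun v => wsum s (fun q =>
          Metric.diam (compFam S u '' (compFam S v '' (compFam S q '' U))) *
            (if compFam S v β = β then r⁻¹ ^ (t + 1) else 0)))) := by
        refine wsum_congr _ _ _ fun u hu => ?_
        rw [wsum_append]
        refine wsum_congr _ _ _ fun v hv => wsum_congr _ _ _ fun q hq => ?_
        rw [compFam_image_append, compFam_image_append]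
        congr 1
        simp only [hind, hpt, true_and]
        have : List.take t (List.drop p (u ++ (v ++ q))) = v := by
          rw [← hu, ← hv]; simp
        rw [this]
      rw [this]
      simp only [wsum_eq]
      rw [Finset.sum_comm]
      refine Finset.sum_congr rfl fun v _ => ?_
      rw [Finset.sum_comm]
    rw [e1]
    refine wsum_unique t _ _ hpos (fun v => compFam S v β = β) ?_ ?_
      (fun w w' hw hw' h h' => huniq w w' (hw.trans hw'.symm) h h')
    · intro v _ hv
      simp [hv, wsum_const]
    · intro v hv hfix
      simp only [hfix, if_true]
      have g : ∀ q : List κ, wsum p (fun u =>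
          Metric.diam (compFam S u '' (compFam S v '' (compFam S q '' U))) * r⁻¹ ^ (t + 1)) ≤
          (C * E ^ p * r⁻¹) * Metric.diam (compFam S q '' U) := by
        intro q
        rw [wsum_mul]
        have hq := Ivl.image hr.le hS hI hU q
        have hv' := Ivl.image hr.le hS hI hq v
        have b1 := ha p _ hv'
        have b2 := compFam_diam S hr.le hS v _ hq.1.isBounded
        rw [hv] at b2
        have b3 := haC p
        calc _ ≤ (C * E ^ p * (r ^ t * Metric.diam (compFam S q '' U))) * r⁻¹ ^ (t + 1) := by
              refine mul_le_mul_of_nonneg_right (b1.trans ?_) (by positivity)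
              exact mul_le_mul b3 b2 (hd _) (by positivity)
          _ = _ := by
              rw [pow_succ, inv_pow]
              field_simp
      refine (wsum_mono _ _ _ fun q _ => g q).trans ?_
      rw [wsum_mul_left]
      have b1 := ha s U hU
      have b2 := haC s
      calc _ ≤ (C * E ^ p * r⁻¹) * (C * E ^ s * Metric.diam U) := by
            refine mul_le_mul_of_nonneg_left (b1.trans ?_) (by positivity)
            exact mul_le_mul_of_nonneg_right b2 (hd _)
        _ = r⁻¹ * C ^ 2 * E ^ (p + s) * Metric.diam U := by rw [pow_add]; ring
        _ ≤ _ := by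
            have := pow_le_pow_right₀ hE (show p + s ≤ N by omega)
            have := hd U
            gcongr
  have h3 := Finset.sum_le_sum fun p hp => Finset.sum_le_sum (h2 p hp)
  have h4 := ha N U hU
  have h5 := mul_le_mul_of_nonneg_right (haC N) (hd U)
  simp only [Finset.sum_const, Finset.card_range, nsmul_eq_mul] at h3
  push_cast at h3
  calc _ ≤ _ := add_le_add (h4.trans h5) h3
    _ = _ := by ring

theorem block_iter {κ : Type} [Fintype κ] {S : κ → ℝ → ℝ} {β η r z A : ℝ} {N : ℕ} {I : Set ℝ}
    (hr : 0 < r) (hz : 0 ≤ z) (hA : 0 ≤ A)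
    (hS : ∀ k x y, |S k x - S k y| ≤ r * |x - y|) (hI : ∀ k, S k '' I ⊆ I)
    (h : ∀ x U, Ivl I U →
      wsum N (fun w => Metric.diam (compFam S w '' U) * z ^ hits S β η w x) ≤ A * Metric.diam U)
    (M : ℕ) (x : ℝ) (U : Set ℝ) (hU : Ivl I U) :
    wsum (M * N) (fun w => Metric.diam (compFam S w '' U) * z ^ hits S β η w x) ≤
      A ^ M * Metric.diam U := by
  induction M with
  | zero => simp [wsum, hits, compFam]
  | succ M ih =>
    rw [Nat.succ_mul, Nat.add_comm, wsum_append]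
    have e : wsum N (fun u => wsum (M * N) (fun v =>
        Metric.diam (compFam S (u ++ v) '' U) * z ^ hits S β η (u ++ v) x)) =
      wsum (M * N) (fun v => wsum N (fun u =>
        Metric.diam (compFam S u '' (compFam S v '' U)) *
          z ^ hits S β η u (compFam S v x)) * z ^ hits S β η v x) := by
      simp only [wsum_eq, Finset.sum_mul]
      rw [Finset.sum_comm]
      refine Finset.sum_congr rfl fun v _ => Finset.sum_congr rfl fun u _ => ?_
      rw [compFam_image_append, hits_append, pow_add]; ring
    rw [e]
    have : ∀ v : List κ, wsum N (fun u =>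
        Metric.diam (compFam S u '' (compFam S v '' U)) *
          z ^ hits S β η u (compFam S v x)) * z ^ hits S β η v x ≤
        A * (Metric.diam (compFam S v '' U) * z ^ hits S β η v x) := by
      intro v
      rw [← mul_assoc]
      exact mul_le_mul_of_nonneg_right (h _ _ (Ivl.image hr.le hS hI hU v)) (by positivity)
    refine (wsum_mono _ _ _ fun v _ => this v).trans ?_
    rw [wsum_mul_left, pow_succ']
    calc _ ≤ A * (A ^ M * Metric.diam U) := mul_le_mul_of_nonneg_left ih hA
      _ = _ := by ring

/-! growth -/

/-- worst-case growth of the total length -/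
def growth {κ : Type} [Fintype κ] (S : κ → ℝ → ℝ) (I : Set ℝ) (n : ℕ) : ℝ :=
  sSup {q : ℝ | ∃ U, Ivl I U ∧ 0 < Metric.diam U ∧
    q = wsum n (fun w => Metric.diam (compFam S w '' U)) / Metric.diam U}

section
variable {κ : Type} [Fintype κ] {S : κ → ℝ → ℝ} {r : ℝ} {I : Set ℝ}

theorem growth_bdd (hr : 0 ≤ r) (hr1 : r ≤ 1)
    (hS : ∀ k x y, |S k x - S k y| ≤ r * |x - y|) (n : ℕ) :
    BddAbove {q : ℝ | ∃ U, Ivl I U ∧ 0 < Metric.diam U ∧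
    q = wsum n (fun w => Metric.diam (compFam S w '' U)) / Metric.diam U} := by
  refine ⟨(Fintype.card κ : ℝ) ^ n, ?_⟩
  rintro q ⟨U, hU, hd, rfl⟩
  rw [div_le_iff₀ hd, ← wsum_const]
  refine wsum_mono _ _ _ fun w _ => (compFam_diam S hr hS w U hU.1.isBounded).trans ?_
  have := pow_le_one₀ hr hr1 (n := w.length)
  nlinarith

theorem growth_spec (hr : 0 ≤ r) (hr1 : r ≤ 1)
    (hS : ∀ k x y, |S k x - S k y| ≤ r * |x - y|) (n : ℕ) (U : Set ℝ) (hU : Ivl I U) :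
    wsum n (fun w => Metric.diam (compFam S w '' U)) ≤ growth S I n * Metric.diam U := by
  rcases (Metric.diam_nonneg (s := U)).eq_or_lt with h | h
  · rw [← h, mul_zero]
    have := wsum_mono n (fun w => Metric.diam (compFam S w '' U)) (fun _ => 0) fun w _ => by
      have := compFam_diam S hr hS w U hU.1.isBounded
      simpa [← h] using this
    simpa [wsum_const] using this
  · rw [← div_le_iff₀ h]
    exact le_csSup (growth_bdd hr hr1 hS n) ⟨U, hU, h, rfl⟩

theorem growth_nonneg (n : ℕ) : 0 ≤ growth S I n := by
  refine Real.sSup_nonneg ?_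
  rintro q ⟨U, hU, hd, rfl⟩
  exact div_nonneg (wsum_nonneg _ _ fun _ _ => Metric.diam_nonneg) hd.le

theorem growth_le {n : ℕ} {C : ℝ} (hC : 0 ≤ C)
    (h : ∀ U, Ivl I U → wsum n (fun w => Metric.diam (compFam S w '' U)) ≤ C * Metric.diam U) :
    growth S I n ≤ C := by
  refine Real.sSup_le ?_ hC
  rintro q ⟨U, hU, hd, rfl⟩
  rw [div_le_iff₀ hd]; exact h U hU

theorem growth_add_le (hr : 0 ≤ r) (hr1 : r ≤ 1)
    (hS : ∀ k x y, |S k x - S k y| ≤ r * |x - y|) (hI : ∀ k, S k '' I ⊆ I) (p q : ℕ) :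
    growth S I (p + q) ≤ growth S I p * growth S I q := by
  refine growth_le (mul_nonneg (growth_nonneg _) (growth_nonneg _)) fun U hU => ?_
  rw [wsum_append]
  have e : wsum p (fun u => wsum q (fun v => Metric.diam (compFam S (u ++ v) '' U))) =
      wsum q (fun v => wsum p (fun u => Metric.diam (compFam S u '' (compFam S v '' U)))) := by
    simp only [wsum_eq]
    rw [Finset.sum_comm]
    simp only [compFam_image_append]
  rw [e]
  refine (wsum_mono _ _ _ fun v _ => growth_spec hr hr1 hS p _ (Ivl.image hr hS hI hU v)).trans ?_
  rw [wsum_mul_left, mul_assoc]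
  exact mul_le_mul_of_nonneg_left (growth_spec hr hr1 hS q U hU) (growth_nonneg _)

theorem compFam_diam_lower {c : ℝ} (hr : 0 ≤ r) (hc : 0 ≤ c)
    (hS : ∀ k x y, |S k x - S k y| ≤ r * |x - y|)
    (hlow : ∀ k U, IsCompact U → IsConnected U → c * Metric.diam U ≤ Metric.diam (S k '' U))
    (w : List κ) (U : Set ℝ) (h1 : IsCompact U) (h2 : IsConnected U) :
    c ^ w.length * Metric.diam U ≤ Metric.diam (compFam S w '' U) := by
  induction w with
  | nil => simp [compFam]
  | cons k w ih =>
    have hc' := compFam_continuous S hr hS w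
    rw [compFam_cons', Set.image_comp, List.length_cons, pow_succ', mul_assoc]
    exact (mul_le_mul_of_nonneg_left ih hc).trans
      (hlow k _ (h1.image hc') (h2.image _ hc'.continuousOn))

theorem growth_lower {c : ℝ} [Nonempty κ] (hr : 0 ≤ r) (hr1 : r ≤ 1) (hc : 0 ≤ c)
    (hS : ∀ k x y, |S k x - S k y| ≤ r * |x - y|)
    (hlow : ∀ k U, IsCompact U → IsConnected U → c * Metric.diam U ≤ Metric.diam (S k '' U))
    (hII : Ivl I I) (hId : 0 < Metric.diam I) (n : ℕ) :
    c ^ n ≤ growth S I n := by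
  have h1 := growth_spec hr hr1 hS n I hII
  have h2 : wsum (κ := κ) n (fun _ => c ^ n * Metric.diam I) ≤
      wsum n (fun w => Metric.diam (compFam S w '' I)) :=
    wsum_mono _ _ _ fun w hw => by
      have := compFam_diam_lower hr hc hS hlow w I hII.1 hII.2.1
      rwa [hw] at this
  rw [wsum_const] at h2
  have h3 : (1 : ℝ) ≤ (Fintype.card κ : ℝ) ^ n :=
    one_le_pow₀ (by exact_mod_cast Fintype.card_pos)
  have h4 : 0 ≤ c ^ n * Metric.diam I := by positivity
  have h5 : c ^ n * Metric.diam I ≤ growth S I n * Metric.diam I := by nlinarith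
  exact le_of_mul_le_mul_right h5 hId

theorem growth_small (hr : 0 ≤ r)
    (hS : ∀ k x y, |S k x - S k y| ≤ r * |x - y|) (n : ℕ) {u C : ℝ} (hu : 0 < u)
    (hC : 0 ≤ C) (hCg : C < growth S I n) :
    ∃ U, Ivl I U ∧ 0 < Metric.diam U ∧ Metric.diam U ≤ u ∧
      C * Metric.diam U ≤ wsum n (fun w => Metric.diam (compFam S w '' U)) := by
  by_contra hcon
  push Not at hcon
  refine absurd (growth_le (n := n) (S := S) (I := I) hC fun U hU => ?_) (not_le.2 hCg)
  have key : ∀ j : ℕ, ∀ p q : ℝ, p ≤ q → q - p ≤ 2 ^ j * u → Icc p q ⊆ I →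
      wsum n (fun w => Metric.diam (compFam S w '' Icc p q)) ≤ C * (q - p) := by
    intro j
    induction j with
    | zero =>
      intro p q hpq hlen hsub
      have hIv : Ivl I (Icc p q) := ⟨isCompact_Icc, isConnected_Icc hpq, hsub⟩
      have hdi : Metric.diam (Icc p q) = q - p := Real.diam_Icc hpq
      rcases hpq.eq_or_lt with rfl | hlt
      · have := wsum_mono n (fun w => Metric.diam (compFam S w '' Icc p p)) (fun _ => 0) fun w _ => by
          simp
        simpa [wsum_const] using this
      · have := hcon _ hIv (by rw [hdi]; linarith) (by rw [hdi]; simpa using hlen)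
        rw [hdi] at this
        exact this.le
    | succ j ih =>
      intro p q hpq hlen hsub
      set t := (p + q) / 2 with ht
      have e : Icc p q = Icc p t ∪ Icc t q := (Icc_union_Icc_eq_Icc (by linarith) (by linarith)).symm
      rw [pow_succ] at hlen
      have i1 := ih p t (by linarith) (by linarith) (fun y hy => hsub ⟨hy.1, by linarith [hy.2]⟩)
      have i2 := ih t q (by linarith) (by linarith) (fun y hy => hsub ⟨by linarith [hy.1], hy.2⟩)
      have : wsum n (fun w => Metric.diam (compFam S w '' Icc p q)) ≤
        wsum n (fun w => Metric.diam (compFam S w '' Icc p t) +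
          Metric.diam (compFam S w '' Icc t q)) := by
        refine wsum_mono _ _ _ fun w _ => ?_
        rw [e, Set.image_union]
        refine Metric.diam_union' ⟨compFam S w t, ⟨t, ?_, rfl⟩, ⟨t, ?_, rfl⟩⟩
        · exact ⟨by linarith, le_rfl⟩
        · exact ⟨le_rfl, by linarith⟩
      rw [wsum_add] at this
      linarith
  have hUe := eq_Icc_of_connected_compact hU.2.1 hU.1
  set p := sInf U
  set q := sSup U
  have hpq : p ≤ q := by
    obtain ⟨y, hy⟩ := hU.2.1.nonempty
    rw [hUe] at hy; exact hy.1.trans hy.2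
  have hsub := hU.2.2
  rw [hUe] at hsub ⊢
  rw [Real.diam_Icc hpq]
  obtain ⟨j, hj⟩ := pow_unbounded_of_one_lt ((q - p) / u) (one_lt_two (α := ℝ))
  exact key j p q hpq (by rw [div_lt_iff₀ hu] at hj; exact hj.le) hsub

end

/-- Fekete -/
theorem fekete_mul {a : ℕ → ℝ} {c ε K : ℝ} (hc : 0 < c) (hlow : ∀ n, c ^ n ≤ a n)
    (hsub : ∀ p q, a (p + q) ≤ a p * a q) (hε : 0 < ε) (hK : 0 < K)
    (hfreq : ∃ᶠ n : ℕ in atTop, K * Real.exp (ε * n) ≤ a n) :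
    ∃ L : ℝ, 0 < L ∧ (∀ n : ℕ, Real.exp (L * n) ≤ a n ∨ n = 0) ∧
      ∀ θ > 0, ∃ C ≥ 0, ∀ n : ℕ, a n ≤ C * Real.exp (L + θ) ^ n := by
  have hpos : ∀ n, 0 < a n := fun n => (pow_pos hc n).trans_le (hlow n)
  have hS : Subadditive (fun n => Real.log (a n)) := by
    intro p q
    simp only
    rw [← Real.log_mul (hpos p).ne' (hpos q).ne']
    exact Real.log_le_log (hpos _) (hsub p q)
  have hb : BddBelow (range fun n : ℕ => Real.log (a n) / n) := by
    refine ⟨min 0 (Real.log c), ?_⟩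
    rintro _ ⟨n, rfl⟩
    rcases Nat.eq_zero_or_pos n with rfl | hn
    · simp
    · have hn' : (0 : ℝ) < n := by exact_mod_cast hn
      refine (min_le_right _ _).trans ?_
      show Real.log c ≤ Real.log (a n) / n
      rw [le_div_iff₀ hn']
      have := Real.log_le_log (pow_pos hc n) (hlow n)
      rw [Real.log_pow] at this
      linarith
  have ht := hS.tendsto_lim hb
  refine ⟨hS.lim, ?_, ?_, ?_⟩
  · refine lt_of_lt_of_le hε ?_
    have h0 : Tendsto (fun n : ℕ => Real.log K / (n : ℝ)) atTop (nhds 0) :=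
      tendsto_const_div_atTop_nhds_zero_nat _
    have h1 := ht.sub h0
    rw [sub_zero] at h1
    refine ge_of_tendsto_of_frequently h1 ?_
    refine (hfreq.and_eventually (eventually_gt_atTop 0)).mono ?_
    rintro n ⟨h, hn⟩
    have hn' : (0 : ℝ) < n := by exact_mod_cast hn
    have := Real.log_le_log (by positivity) h
    rw [Real.log_mul hK.ne' (Real.exp_pos _).ne', Real.log_exp] at this
    rw [← sub_div, le_div_iff₀ hn']
    linarith
  · intro n
    rcases Nat.eq_zero_or_pos n with rfl | hn
    · right; rfl
    · left
      have hn' : (0 : ℝ) < n := by exact_mod_cast hn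
      have := hS.lim_le_div hb hn.ne'
      rw [le_div_iff₀ hn'] at this
      rwa [← Real.le_log_iff_exp_le (hpos n)]
  · intro θ hθ
    have hev : ∀ᶠ n : ℕ in atTop, Real.log (a n) / n < hS.lim + θ :=
      ht.eventually_lt_const (by linarith)
    obtain ⟨n0, hn0⟩ := eventually_atTop.1 hev
    set E := Real.exp (hS.lim + θ) with hE
    have hEpos : 0 < E := Real.exp_pos _
    refine ⟨1 + ∑ n ∈ Finset.range (n0 + 1), a n / E ^ n, ?_, ?_⟩
    · have : 0 ≤ ∑ n ∈ Finset.range (n0 + 1), a n / E ^ n :=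
        Finset.sum_nonneg fun n _ => div_nonneg (hpos n).le (by positivity)
      linarith
    · intro n
      have hs : 0 ≤ ∑ n ∈ Finset.range (n0 + 1), a n / E ^ n :=
        Finset.sum_nonneg fun n _ => div_nonneg (hpos n).le (by positivity)
      rw [← div_le_iff₀ (by positivity)]
      rcases le_or_gt n n0 with h | h
      · have := Finset.single_le_sum (f := fun n => a n / E ^ n)
          (fun n _ => div_nonneg (hpos n).le (by positivity))
          (Finset.mem_range.2 (Nat.lt_succ_of_le h))
        linarith
      · have hn' : (0 : ℝ) < n := by exact_mod_cast (Nat.zero_le _).trans_lt h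
        have h1 := hn0 n h.le
        rw [div_lt_iff₀ hn'] at h1
        have h2 : a n ≤ E ^ n := by
          rw [hE, ← Real.exp_nat_mul, ← Real.log_le_iff_le_exp (hpos n)]
          linarith
        have : a n / E ^ n ≤ 1 := by rw [div_le_one (by positivity)]; exact h2
        linarith

/-! piecewise linear functions -/

theorem slopeIdx_lt {lk : ℕ} {b : Fin lk → ℝ} (hb : StrictMono b) (u : ℝ) (j : Fin lk) :
    b j < u ↔ (j : ℕ) < (slopeIdx b u : ℕ) := by
  have e : (slopeIdx b u : ℕ) = (Finset.univ.filter fun j : Fin lk => b j < u).card := rfl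
  rw [e]
  constructor
  · intro h
    have : Finset.Iic j ⊆ Finset.univ.filter fun j : Fin lk => b j < u := by
      intro i hi
      simp only [Finset.mem_Iic] at hi
      simp only [Finset.mem_filter, Finset.mem_univ, true_and]
      exact (hb.monotone hi).trans_lt h
    have := Finset.card_le_card this
    rw [Fin.card_Iic] at this
    omega
  · intro h
    by_contra hn
    have : (Finset.univ.filter fun j : Fin lk => b j < u) ⊆ Finset.Iio j := by
      intro i hi
      simp only [Finset.mem_filter, Finset.mem_univ, true_and] at hi
      simp only [Finset.mem_Iio]
      by_contra hij
      exact hn ((hb.monotone (not_lt.1 hij)).trans_lt hi)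
    have := Finset.card_le_card this
    rw [Fin.card_Iio] at this
    omega

theorem slopeIdx_congr {lk : ℕ} {b b' : Fin lk → ℝ} {u u' : ℝ}
    (h : ∀ j, b j < u ↔ b' j < u') : slopeIdx b u = slopeIdx b' u' := by
  unfold slopeIdx
  simp only [h]

theorem slope_formula {lk : ℕ} {b : Fin lk → ℝ} (hb : StrictMono b) (ρ : Fin (lk + 1) → ℝ)
    (u : ℝ) : ρ (slopeIdx b u) =
      ρ 0 + ∑ j : Fin lk, if b j < u then ρ j.succ - ρ j.castSucc else 0 := by
  simp only [slopeIdx_lt hb]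
  generalize slopeIdx b u = i
  set R : ℕ → ℝ := fun n => if h : n < lk + 1 then ρ ⟨n, h⟩ else 0 with hR
  have h1 : ∀ j : Fin lk, (if (j : ℕ) < (i : ℕ) then ρ j.succ - ρ j.castSucc else 0) =
      (fun n : ℕ => if n < (i : ℕ) then R (n + 1) - R n else 0) j := by
    intro j
    have a1 : (j : ℕ) < lk := j.2
    have a2 : R (j + 1) = ρ j.succ := by
      simp only [hR]; rw [dif_pos (by omega)]; rfl
    have a3 : R j = ρ j.castSucc := by
      simp only [hR]; rw [dif_pos (by omega)]; rfl
    simp only [a2, a3]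
  rw [Finset.sum_congr rfl fun j _ => h1 j, Fin.sum_univ_eq_sum_range
    (fun n : ℕ => if n < (i : ℕ) then R (n + 1) - R n else 0), ← Finset.sum_filter]
  have : (Finset.range lk).filter (fun n => n < (i : ℕ)) = Finset.range i := by
    ext n; simp only [Finset.mem_filter, Finset.mem_range]
    have := i.2
    omega
  rw [this, Finset.sum_range_sub]
  have a4 : R i = ρ i := by simp only [hR]; rw [dif_pos i.2]
  have a5 : R 0 = ρ 0 := by simp only [hR]; rw [dif_pos (by omega)]; rfl
  rw [a4, a5]; ring

theorem step_integrable (b d x y : ℝ) :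
    IntervalIntegrable (fun u : ℝ => if b < u then d else 0) volume x y := by
  have h : (fun u : ℝ => if b < u then d else 0) = (Ioi b).indicator (fun _ => d) := by
    ext u; simp [Set.indicator]
  rw [h, intervalIntegrable_iff]
  exact (integrableOn_const (by simp)).indicator measurableSet_Ioi

theorem step_integral (b d x y : ℝ) :
    ∫ u in x..y, (if b < u then d else 0) = d * (max (y - b) 0 - max (x - b) 0) := by
  have key : ∀ y, ∫ u in b..y, (if b < u then d else 0) = d * max (y - b) 0 := by
    intro y
    rcases le_total b y with h | h
    · rw [intervalIntegral.integral_congr_ae (g := fun _ => d)]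
      · simp [max_eq_left (sub_nonneg.2 h), mul_comm]
      · refine Filter.Eventually.of_forall fun u hu => ?_
        rw [uIoc_of_le h] at hu
        rw [if_pos hu.1]
    · rw [intervalIntegral.integral_congr_ae (g := fun _ => 0)]
      · simp [max_eq_right (sub_nonpos.2 h)]
      · refine Filter.Eventually.of_forall fun u hu => ?_
        rw [uIoc_of_ge h] at hu
        rw [if_neg (not_lt.2 hu.2)]
  rw [← intervalIntegral.integral_add_adjacent_intervals (step_integrable b d x b)
    (step_integrable b d b y), intervalIntegral.integral_symm, key, key]
  ring

theorem steps_integrable {lk : ℕ} (b d : Fin lk → ℝ) (x y : ℝ) :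
    IntervalIntegrable (fun u : ℝ => ∑ j : Fin lk, if b j < u then d j else 0) volume x y := by
  have e : (fun u : ℝ => ∑ j : Fin lk, if b j < u then d j else 0) =
      ∑ j : Fin lk, fun u : ℝ => if b j < u then d j else 0 := by
    funext u; simp
  rw [e]
  exact IntervalIntegrable.sum Finset.univ fun j _ => step_integrable _ _ _ _

theorem slope_integrable {lk : ℕ} {b : Fin lk → ℝ} (hb : StrictMono b) (ρ : Fin (lk + 1) → ℝ)
    (x y : ℝ) : IntervalIntegrable (fun u => ρ (slopeIdx b u)) volume x y := by
  simp only [slope_formula hb]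
  refine IntervalIntegrable.add (by simp) ?_
  exact steps_integrable b _ x y

theorem plFun_sub {lk : ℕ} {b : Fin lk → ℝ} (hb : StrictMono b) (ρ : Fin (lk + 1) → ℝ)
    (τ x y : ℝ) : plFun b ρ τ y - plFun b ρ τ x = ∫ u in x..y, ρ (slopeIdx b u) := by
  unfold plFun
  rw [← intervalIntegral.integral_interval_sub_left (slope_integrable hb ρ 0 y)
    (slope_integrable hb ρ 0 x)]
  ring

theorem plFun_lip {lk : ℕ} {b : Fin lk → ℝ} (hb : StrictMono b) {ρ : Fin (lk + 1) → ℝ} {r : ℝ}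
    (hρ : ∀ i, |ρ i| ≤ r) (τ x y : ℝ) : |plFun b ρ τ x - plFun b ρ τ y| ≤ r * |x - y| := by
  rw [plFun_sub hb]
  exact intervalIntegral.norm_integral_le_of_norm_le_const
    (f := fun u => ρ (slopeIdx b u)) fun u _ => hρ (slopeIdx b u)

theorem plFun_lin {lk : ℕ} {b : Fin lk → ℝ} (hb : StrictMono b) {ρ : Fin (lk + 1) → ℝ}
    {i : Fin (lk + 1)} (τ x y : ℝ) (h : ∀ u ∈ uIoc x y, slopeIdx b u = i) :
    plFun b ρ τ y - plFun b ρ τ x = ρ i * (y - x) := by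
  rw [plFun_sub hb, intervalIntegral.integral_congr_ae (g := fun _ => ρ i)]
  · simp [mul_comm]
  · refine Filter.Eventually.of_forall fun u hu => ?_
    rw [h u hu]

theorem plFun_formula {lk : ℕ} {b : Fin lk → ℝ} (hb : StrictMono b) (ρ : Fin (lk + 1) → ℝ)
    (τ x : ℝ) : plFun b ρ τ x = τ + ρ 0 * x +
      ∑ j : Fin lk, (ρ j.succ - ρ j.castSucc) * (max (x - b j) 0 - max (0 - b j) 0) := by
  unfold plFun
  simp only [slope_formula hb]
  rw [intervalIntegral.integral_add (by simp), intervalIntegral.integral_finsetSum]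
  · simp only [step_integral]
    simp [mul_comm, add_assoc]
  · exact fun j _ => step_integrable _ _ _ _
  · exact steps_integrable b _ 0 x

theorem plFun_perturb {lk : ℕ} {b b' : Fin lk → ℝ} (hb : StrictMono b) (hb' : StrictMono b')
    {ρ : Fin (lk + 1) → ℝ} (hρ : ∀ i, |ρ i| ≤ 1) {τ τ' δ : ℝ}
    (hbb : ∀ j, |b j - b' j| ≤ δ) (hτ : |τ - τ'| ≤ δ) (x : ℝ) :
    |plFun b ρ τ x - plFun b' ρ τ' x| ≤ (1 + 4 * lk) * δ := by
  rw [plFun_formula hb, plFun_formula hb']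
  have e : τ + ρ 0 * x +
      ∑ j : Fin lk, (ρ j.succ - ρ j.castSucc) * (max (x - b j) 0 - max (0 - b j) 0) -
      (τ' + ρ 0 * x +
      ∑ j : Fin lk, (ρ j.succ - ρ j.castSucc) * (max (x - b' j) 0 - max (0 - b' j) 0)) =
      (τ - τ') + ∑ j : Fin lk, (ρ j.succ - ρ j.castSucc) *
        ((max (x - b j) 0 - max (x - b' j) 0) - (max (0 - b j) 0 - max (0 - b' j) 0)) := by
    have : ∀ s t : ℝ, τ + ρ 0 * x + s - (τ' + ρ 0 * x + t) = (τ - τ') + (s - t) := by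
      intros; ring
    rw [this, ← Finset.sum_sub_distrib]
    congr 1
    refine Finset.sum_congr rfl fun j _ => by ring
  rw [e]
  have hterm : ∀ j : Fin lk, |(ρ j.succ - ρ j.castSucc) *
        ((max (x - b j) 0 - max (x - b' j) 0) - (max (0 - b j) 0 - max (0 - b' j) 0))| ≤ 4 * δ := by
    intro j
    have hm : ∀ y, |max (y - b j) 0 - max (y - b' j) 0| ≤ δ := by
      intro y
      refine (abs_max_sub_max_le_abs _ _ _).trans ?_
      have : y - b j - (y - b' j) = -(b j - b' j) := by ring
      rw [this, abs_neg]; exact hbb j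
    have h1 : |ρ j.succ - ρ j.castSucc| ≤ 2 := by
      have := abs_sub (ρ j.succ) (ρ j.castSucc)
      linarith [hρ j.succ, hρ j.castSucc]
    have h2 : |(max (x - b j) 0 - max (x - b' j) 0) - (max (0 - b j) 0 - max (0 - b' j) 0)| ≤ 2 * δ := by
      have := abs_sub (max (x - b j) 0 - max (x - b' j) 0) (max (0 - b j) 0 - max (0 - b' j) 0)
      linarith [hm x, hm 0]
    rw [abs_mul]
    have := mul_le_mul h1 h2 (abs_nonneg _) (by norm_num)
    linarith
  have hs := (Finset.abs_sum_le_sum_abs (fun j : Fin lk => (ρ j.succ - ρ j.castSucc) *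
        ((max (x - b j) 0 - max (x - b' j) 0) - (max (0 - b j) 0 - max (0 - b' j) 0)))
        Finset.univ).trans (Finset.sum_le_sum fun j _ => hterm j)
  simp only [Finset.sum_const, Finset.card_univ, Fintype.card_fin, nsmul_eq_mul] at hs
  refine (abs_add_le _ _).trans ?_
  linarith

theorem plFun_diam_lower {lk : ℕ} {b : Fin lk → ℝ} (hb : StrictMono b) {ρ : Fin (lk + 1) → ℝ}
    {r c : ℝ} (hρ : ∀ i, |ρ i| ≤ r) (hc0 : 0 ≤ c) (hc : ∀ i, c * (lk + 1) ≤ |ρ i|) (τ : ℝ)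
    (U : Set ℝ) (h1 : IsCompact U) (h2 : IsConnected U) :
    c * Metric.diam U ≤ Metric.diam (plFun b ρ τ '' U) := by
  have hUe := eq_Icc_of_connected_compact h2 h1
  set p := sInf U
  set q := sSup U
  have hpq : p ≤ q := by
    obtain ⟨y, hy⟩ := h2.nonempty
    rw [hUe] at hy; exact hy.1.trans hy.2
  have hcont : Continuous (plFun b ρ τ) := by
    have : LipschitzWith (Real.toNNReal r) (plFun b ρ τ) := by
      refine LipschitzWith.of_dist_le_mul fun x y => ?_
      rw [Real.coe_toNNReal _ ((abs_nonneg _).trans (hρ 0))]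
      exact plFun_lip hb hρ τ x y
    exact this.continuous
  have hbd : Bornology.IsBounded (plFun b ρ τ '' U) := (h1.image hcont).isBounded
  rw [hUe] at hbd ⊢
  rw [Real.diam_Icc hpq]
  set h := (q - p) / (lk + 1) with hh
  have hl : (0 : ℝ) < lk + 1 := by positivity
  have hh0 : 0 ≤ h := div_nonneg (by linarith) hl.le
  have hhl : h * (lk + 1) = q - p := by rw [hh]; field_simp
  have hex : ∃ i : Fin (lk + 1), ∀ j : Fin lk, ¬ (p + i * h ≤ b j ∧ b j < p + (i + 1) * h) := by
    by_contra hcon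
    push Not at hcon
    choose g hg using hcon
    obtain ⟨i, i', hne, he⟩ := Fintype.exists_ne_map_eq_of_card_lt g (by simp)
    wlog hlt : i < i' generalizing i i'
    · exact this i' i hne.symm he.symm (lt_of_le_of_ne (not_lt.1 hlt) hne.symm)
    have a1 := (hg i).2
    have a2 := (hg i').1
    rw [← he] at a2
    have a3 : ((i : ℕ) : ℝ) + 1 ≤ ((i' : ℕ) : ℝ) := by exact_mod_cast hlt
    have := mul_le_mul_of_nonneg_right a3 hh0
    linarith
  obtain ⟨i, hi⟩ := hex
  set x := p + i * h with hx
  set y := p + (i + 1) * h with hy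
  have hxy : y - x = h := by rw [hx, hy]; ring
  have hi1 : ((i : ℕ) : ℝ) + 1 ≤ lk + 1 := by exact_mod_cast i.2
  have hxm : x ∈ Icc p q := by
    have a1 : (0 : ℝ) ≤ (i : ℕ) * h := by positivity
    have a2 := mul_le_mul_of_nonneg_right hi1 hh0
    constructor <;> rw [hx] <;> nlinarith
  have hym : y ∈ Icc p q := by
    have a1 : (0 : ℝ) ≤ ((i : ℕ) + 1) * h := by positivity
    have a2 := mul_le_mul_of_nonneg_right hi1 hh0
    constructor <;> rw [hy] <;> nlinarith
  have hlin := plFun_lin hb (ρ := ρ) (i := slopeIdx b y) τ x y (by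
    intro u hu
    rw [uIoc_of_le (by linarith)] at hu
    refine slopeIdx_congr fun j => ⟨fun hj => hj.trans_le hu.2, fun hj => ?_⟩
    by_contra hn
    exact hi j ⟨hu.1.le.trans (not_lt.1 hn), hj⟩)
  have hd := Metric.dist_le_diam_of_mem hbd ⟨y, hym, rfl⟩ ⟨x, hxm, rfl⟩
  rw [Real.dist_eq, hlin, abs_mul, hxy, abs_of_nonneg hh0] at hd
  have := mul_le_mul_of_nonneg_right (hc (slopeIdx b y)) hh0
  calc c * (q - p) = c * (lk + 1) * h := by rw [← hhl]; ring
    _ ≤ _ := this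
    _ ≤ _ := hd

/-! supporting interval -/

theorem suppInt_spec {m : ℕ} (k0 : Fin m) {f : Fin m → ℝ → ℝ} {r : ℝ} (hr : 0 ≤ r) (hr1 : r < 1)
    (hf : ∀ k x y, |f k x - f k y| ≤ r * |x - y|) :
    ∃ A B : ℝ, A < B ∧ suppInt f = Icc A B ∧ ∀ k, f k '' Icc A B ⊆ Icc A B := by
  by_cases h : ∃ φ : ℝ, ∀ k, f k φ = φ
  · refine ⟨h.choose - 1 / 2, h.choose + 1 / 2, by linarith, ?_, ?_⟩
    · unfold suppInt; rw [dif_pos h]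
    · rintro k _ ⟨x, hx, rfl⟩
      have h1 := hf k x h.choose
      rw [h.choose_spec k] at h1
      have h2 : |x - h.choose| ≤ 1 / 2 := abs_le.2 ⟨by linarith [hx.1], by linarith [hx.2]⟩
      have h3 : |f k x - h.choose| ≤ 1 / 2 := by nlinarith [abs_nonneg (x - h.choose)]
      rw [abs_le] at h3
      constructor <;> linarith [h3.1, h3.2]
  · set F : Set (Set ℝ) :=
      {J : Set ℝ | J.Nonempty ∧ (∃ a b : ℝ, J = Set.Icc a b) ∧ ∀ k, f k '' J ⊆ J} with hF
    have e : suppInt f = ⋂₀ F := by unfold suppInt; rw [dif_neg h]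
    have hcont : ∀ k, Continuous (f k) := by
      intro k
      have : LipschitzWith (Real.toNNReal r) (f k) := by
        refine LipschitzWith.of_dist_le_mul fun x y => ?_
        rw [Real.coe_toNNReal _ hr]
        exact hf k x y
      exact this.continuous
    have hfix : ∀ J ∈ F, ∃ p ∈ J, f k0 p = p := by
      rintro J ⟨⟨y, hy⟩, ⟨a, b, rfl⟩, hJ⟩
      obtain ⟨p, hp, hp'⟩ := exists_mem_Icc_isFixedPt_of_mapsTo (hcont k0).continuousOn
        (hy.1.trans hy.2) (Set.mapsTo_iff_image_subset.2 (hJ k0))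
      exact ⟨p, hp, hp'⟩
    set R := (∑ k, |f k 0|) / (1 - r) with hR
    have h1r : 0 < 1 - r := by linarith
    have hR0 : 0 ≤ R := div_nonneg (Finset.sum_nonneg fun _ _ => abs_nonneg _) h1r.le
    have hRF : Icc (-R) R ∈ F := by
      refine ⟨⟨0, by constructor <;> linarith⟩, ⟨_, _, rfl⟩, ?_⟩
      rintro k _ ⟨x, hx, rfl⟩
      have h1 := hf k x 0
      have h2 : |f k 0| ≤ (1 - r) * R := by
        rw [hR, mul_div_cancel₀ _ h1r.ne']
        exact Finset.single_le_sum (f := fun k => |f k 0|) (fun _ _ => abs_nonneg _) (Finset.mem_univ k)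
      have h3 : |x - 0| ≤ R := by rw [sub_zero]; exact abs_le.2 hx
      have h4 := mul_le_mul_of_nonneg_left h3 hr
      have h5 : |f k x| ≤ |f k x - f k 0| + |f k 0| := by
        have := abs_add_le (f k x - f k 0) (f k 0)
        simpa using this
      exact abs_le.1 (by linarith)
    obtain ⟨p, hpR, hp⟩ := hfix _ hRF
    have hpm : p ∈ ⋂₀ F := by
      intro J hJ
      obtain ⟨p', hp'J, hp'⟩ := hfix J hJ
      have : p = p' := by
        have h1 := hf k0 p p'
        rw [hp, hp'] at h1
        have h2 := abs_nonneg (p - p')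
        have : |p - p'| = 0 := by nlinarith
        linarith [abs_eq_zero.1 this]
      rw [this]; exact hp'J
    have hclosed : IsClosed (⋂₀ F) := isClosed_sInter fun J hJ => by
      obtain ⟨_, ⟨a, b, rfl⟩, _⟩ := hJ
      exact isClosed_Icc
    have hcomp : IsCompact (⋂₀ F) :=
      isCompact_Icc.of_isClosed_subset hclosed (Set.sInter_subset_of_mem hRF)
    have hord : (⋂₀ F).OrdConnected := Set.ordConnected_sInter fun J hJ => by
      obtain ⟨_, ⟨a, b, rfl⟩, _⟩ := hJ
      exact ordConnected_Icc
    have hconn : IsConnected (⋂₀ F) := ⟨⟨p, hpm⟩, hord.isPreconnected⟩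
    have hIcc := eq_Icc_of_connected_compact hconn hcomp
    have hinv : ∀ k, f k '' (⋂₀ F) ⊆ ⋂₀ F := by
      intro k
      refine Set.subset_sInter fun J hJ => ?_
      exact (Set.image_mono (Set.sInter_subset_of_mem hJ)).trans (hJ.2.2 k)
    refine ⟨sInf (⋂₀ F), sSup (⋂₀ F), ?_, e.trans hIcc, ?_⟩
    · rw [hIcc] at hpm
      refine lt_of_le_of_ne (hpm.1.trans hpm.2) fun heq => h ⟨p, fun k => ?_⟩
      have hs : ⋂₀ F = {p} := by
        rw [hIcc, ← heq, Icc_self]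
        have : p = sInf (⋂₀ F) := le_antisymm (heq ▸ hpm.2) hpm.1
        rw [← this]
      have := hinv k ⟨p, by rw [hs]; rfl, rfl⟩
      rw [hs] at this
      exact this
    · rw [← hIcc]; exact hinv

theorem suppInt_min {m : ℕ} {f : Fin m → ℝ → ℝ} (h : ¬ ∃ φ : ℝ, ∀ k, f k φ = φ)
    {a b : ℝ} (hab : a ≤ b) (hinv : ∀ k, f k '' Icc a b ⊆ Icc a b) : suppInt f ⊆ Icc a b := by
  unfold suppInt
  rw [dif_neg h]
  exact Set.sInter_subset_of_mem ⟨⟨a, le_rfl, hab⟩, ⟨a, b, rfl⟩, hinv⟩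

/-! ESC -/

theorem affine_comp {ι : Type*} (ρ t : ι → ℝ) (w : List ι) (x : ℝ) :
    compFam (fun p x => ρ p * x + t p) w x =
      (w.map ρ).prod * x + compFam (fun p x => ρ p * x + t p) w 0 := by
  induction w with
  | nil => simp [compFam]
  | cons k w ih =>
    rw [compFam_cons, compFam_cons, ih]
    simp only [List.map_cons, List.prod_cons]
    ring

theorem esc_no_overlap {ι : Type*} {ρ t : ι → ℝ} (h : ESCfam ρ t) (u v : List ι)
    (hl : u.length = v.length) (hne : u ≠ v)
    (hp : (u.map ρ).prod = (v.map ρ).prod)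
    (he : compFam (fun p x => ρ p * x + t p) u 0 = compFam (fun p x => ρ p * x + t p) v 0) :
    False := by
  obtain ⟨c, hc, nl, hnl, H⟩ := h
  have hu : u ≠ [] := by
    rintro rfl
    exact hne (by symm; simpa using hl.symm)
  obtain ⟨k, u', rfl⟩ := List.exists_cons_of_ne_nil hu
  set n := nl ((k :: u').length) with hn
  have hge : (k :: u').length ≤ n := hnl.le_apply
  set P := List.replicate (n - (k :: u').length) k with hP
  have key : ∀ (W : List ι), W.length = n → ∃ i : Fin n → ι, List.ofFn i = W ∧
      ∏ q, ρ (i q) = (W.map ρ).prod := by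
    rintro W hW
    subst_vars
    refine ⟨fun q => W.get (Fin.cast hW.symm q), ?_, ?_⟩
    · apply List.ext_get
      · simp [hW]
      · intro a h1 h2
        simp
    · have : W.map ρ = List.ofFn (fun q : Fin n => ρ (W.get (Fin.cast hW.symm q))) := by
        apply List.ext_get
        · simp [hW]
        · intro a h1 h2
          simp
      rw [this, List.prod_ofFn]
  obtain ⟨i, hi, hi'⟩ := key ((k :: u') ++ P) (by simp only [List.length_append, hP, List.length_replicate]; omega)
  obtain ⟨j, hj, hj'⟩ := key (v ++ P) (by
    simp only [List.length_append, hP, List.length_replicate]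
    rw [← hl]; omega)
  rcases H _ i j (by
    intro hij
    rw [hij, hj] at hi
    exact hne (List.append_cancel_right hi).symm) with h1 | h1
  · apply h1
    rw [hi', hj']
    simp only [List.map_append, List.prod_append, hp]
  · rw [hi, hj, compFam_append, compFam_append, affine_comp _ _ (k :: u'), affine_comp _ _ v, hp, he, sub_self, abs_zero] at h1
    exact absurd h1 (not_le.2 (pow_pos hc _))

/-- lift of a word to the generated self-similar system -/
def liftW {m : ℕ} {l : Fin m → ℕ} (b : BSpace m l) (f : Fin m → ℝ → ℝ) (x : ℝ) :
    List (Fin m) → List (Σ k : Fin m, Fin (l k + 1))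
  | [] => []
  | k :: w => ⟨k, slopeIdx (b k) (compFam f w x)⟩ :: liftW b f x w

theorem liftW_fst {m : ℕ} {l : Fin m → ℕ} (b : BSpace m l) (f : Fin m → ℝ → ℝ) (x : ℝ)
    (w : List (Fin m)) : (liftW b f x w).map (fun q => q.1) = w := by
  induction w with
  | nil => rfl
  | cons k w ih => simp [liftW, ih]

theorem esc_unique {m : ℕ} {l : Fin m → ℕ}
    (ρ : RSpace m l)
    (b : BSpace m l) (τ : Fin m → ℝ) (hb : ∀ k, StrictMono (b k))
    (hesc : ∃ t : (k : Fin m) → Fin (l k + 1) → ℝ,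
      (∀ (k : Fin m) (i : Fin (l k + 1)) (x : ℝ),
        (∀ j : Fin (l k), (j : ℕ) < (i : ℕ) → b k j < x) →
        (∀ j : Fin (l k), (i : ℕ) ≤ (j : ℕ) → x < b k j) →
        paramFun m l (b, τ, ρ) k x = ρ k i * x + t k i) ∧
      ESCfam (fun q : Σ k : Fin m, Fin (l k + 1) => ρ q.1 q.2)
             (fun q : Σ k : Fin m, Fin (l k + 1) => t q.1 q.2))
    (β : ℝ) (u v : List (Fin m)) (hl : u.length = v.length)
    (hu : compFam (paramFun m l (b, τ, ρ)) u β = β)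
    (hv : compFam (paramFun m l (b, τ, ρ)) v β = β) : u = v := by
  obtain ⟨t, ht, hE⟩ := hesc
  set f := paramFun m l (b, τ, ρ) with hf
  have hval : ∀ k y, f k y = ρ k (slopeIdx (b k) y) * y + t k (slopeIdx (b k) y) := by
    intro k y
    set i := slopeIdx (b k) y with hi
    have hz : ∃ z < y, ∀ j, b k j < y → b k j < z := by
      have : ∀ᶠ z in nhdsWithin y (Iio y), ∀ j, b k j < y → b k j < z := by
        rw [Filter.eventually_all]
        intro j
        by_cases hj : b k j < y
        · filter_upwards [Ioo_mem_nhdsLT hj] with z hz _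
          exact hz.1
        · filter_upwards with z h using absurd h hj
      obtain ⟨z, hz1, hz2⟩ := (this.and self_mem_nhdsWithin).exists
      exact ⟨z, hz2, hz1⟩
    obtain ⟨z, hzy, hz⟩ := hz
    have h1 := ht k i z (fun j hj => hz j ((slopeIdx_lt (hb k) y j).2 hj)) (fun j hj => by
      have : ¬ b k j < y := fun h => by
        have := (slopeIdx_lt (hb k) y j).1 h
        rw [← hi] at this
        omega
      linarith)
    have h2 := plFun_lin (hb k) (ρ := ρ k) (i := i) (τ k) z y (by
      intro w hw
      rw [uIoc_of_le hzy.le] at hw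
      refine slopeIdx_congr fun j => ⟨fun hj => hj.trans_le hw.2, fun hj => (hz j hj).trans hw.1⟩)
    have h3 : f k y - f k z = ρ k i * (y - z) := h2
    linarith
  set S : (Σ k : Fin m, Fin (l k + 1)) → ℝ → ℝ := fun q x => ρ q.1 q.2 * x + t q.1 q.2 with hS
  have hlift : ∀ w, compFam S (liftW b f β w) β = compFam f w β := by
    intro w
    induction w with
    | nil => rfl
    | cons k w ih =>
      rw [liftW, compFam_cons, compFam_cons, ih, hval]
  by_contra hne
  set u' := liftW b f β u with hu'
  set v' := liftW b f β v with hv'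
  have hlu : u'.length = u.length := by
    have := congrArg List.length (liftW_fst b f β u); simpa using this
  have hlv : v'.length = v.length := by
    have := congrArg List.length (liftW_fst b f β v); simpa using this
  have hne' : u' ≠ v' := by
    intro h
    apply hne
    rw [← liftW_fst b f β u, ← liftW_fst b f β v, ← hu', ← hv', h]
  have fu : compFam S u' β = β := (hlift u).trans hu
  have fv : compFam S v' β = β := (hlift v).trans hv
  have hprod : ((u' ++ v').map (fun q => ρ q.1 q.2)).prod =
      ((v' ++ u').map (fun q => ρ q.1 q.2)).prod := by
    simp only [List.map_append, List.prod_append]; ring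
  refine esc_no_overlap hE (u' ++ v') (v' ++ u') (by simp [add_comm]) ?_ hprod ?_
  · intro h
    exact hne' (List.append_inj_left h (by rw [hlu, hlv, hl]))
  · have e1 := affine_comp (fun q : Σ k : Fin m, Fin (l k + 1) => ρ q.1 q.2) (fun q => t q.1 q.2) (u' ++ v') β
    have e2 := affine_comp (fun q : Σ k : Fin m, Fin (l k + 1) => ρ q.1 q.2) (fun q => t q.1 q.2) (v' ++ u') β
    have g1 : compFam S (u' ++ v') β = β := by rw [compFam_append, fv, fu]
    have g2 : compFam S (v' ++ u') β = β := by rw [compFam_append, fu, fv]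
    rw [hprod] at e1
    have : compFam S (u' ++ v') β = compFam S (v' ++ u') β := g1.trans g2.symm
    simp only [hS] at this
    linarith

/-! pressure estimates -/

theorem pressure_freq {m : ℕ} (k0 : Fin m) {f : Fin m → ℝ → ℝ} {r c s : ℝ} (hr : 0 < r) (hr1 : r < 1)
    (hc : 0 < c) (hc1 : c ≤ 1)
    (hS : ∀ k x y, |f k x - f k y| ≤ r * |x - y|)
    (hlow : ∀ k U, IsCompact U → IsConnected U → c * Metric.diam U ≤ Metric.diam (f k '' U))
    (hII : Ivl (suppInt f) (suppInt f)) (hId : 0 < Metric.diam (suppInt f))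
    (hs : 1 < s) (hp : pressure f s = 0) :
    ∃ ε > 0, ∃ K > 0, ∃ᶠ n : ℕ in atTop, K * Real.exp (ε * n) ≤ growth f (suppInt f) n := by
  set D := Metric.diam (suppInt f) with hD
  have hlr : Real.log r < 0 := Real.log_neg hr hr1
  set ε := (s - 1) * (-Real.log r) / 2 with hε
  have hεpos : 0 < ε := by
    have : 0 < (s - 1) * (-Real.log r) := mul_pos (by linarith) (by linarith)
    linarith
  have hDs : 0 < D ^ (s - 1) := Real.rpow_pos_of_pos hId _
  have hpos : ∀ w : List (Fin m), c ^ w.length * D ≤ Metric.diam (compFam f w '' suppInt f) :=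
    fun w => compFam_diam_lower hr.le hc.le hS hlow w _ hII.1 hII.2.1
  have hsum : ∀ n : ℕ, (c ^ n * D) ^ s ≤ ∑ w : Fin n → Fin m,
        Metric.diam (compFam f (List.ofFn w) '' suppInt f) ^ s := by
    intro n
    refine le_trans ?_ (Finset.single_le_sum (f := fun w : Fin n → Fin m =>
      Metric.diam (compFam f (List.ofFn w) '' suppInt f) ^ s)
      (fun w _ => Real.rpow_nonneg Metric.diam_nonneg _) (Finset.mem_univ (fun _ => k0)))
    have := hpos (List.ofFn (fun _ : Fin n => k0))
    rw [List.length_ofFn] at this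
    exact Real.rpow_le_rpow (by positivity) this (by linarith)
  have hsp : ∀ n : ℕ, 0 < ∑ w : Fin n → Fin m,
        Metric.diam (compFam f (List.ofFn w) '' suppInt f) ^ s := fun n =>
    lt_of_lt_of_le (Real.rpow_pos_of_pos (by positivity) _) (hsum n)
  have hlc : Real.log c ≤ 0 := Real.log_nonpos hc.le hc1
  have hcob : IsCoboundedUnder (· ≤ ·) atTop (fun n : ℕ =>
      (n : ℝ)⁻¹ * Real.log (∑ w : Fin n → Fin m,
        Metric.diam (compFam f (List.ofFn w) '' suppInt f) ^ s)) := by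
    apply IsBoundedUnder.isCoboundedUnder_le
    refine isBoundedUnder_of ⟨s * Real.log c - s * |Real.log D|, fun n => ?_⟩
    rcases Nat.eq_zero_or_pos n with h0 | h0
    · subst h0
      simp only [Nat.cast_zero, inv_zero, zero_mul]
      have := abs_nonneg (Real.log D)
      show _ ≤ _
      nlinarith
    · have h1 : (1 : ℝ) ≤ n := by exact_mod_cast h0
      have h2 := Real.log_le_log (Real.rpow_pos_of_pos (by positivity) _) (hsum n)
      rw [Real.log_rpow (by positivity), Real.log_mul (by positivity) hId.ne', Real.log_pow] at h2
      show _ ≤ (n : ℝ)⁻¹ * _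
      rw [inv_mul_eq_div, le_div_iff₀ (by linarith)]
      refine le_trans ?_ h2
      have h3 := neg_abs_le (Real.log D)
      have h4 := abs_nonneg (Real.log D)
      have h5 : s * |Real.log D| * 1 ≤ s * |Real.log D| * n :=
        mul_le_mul_of_nonneg_left h1 (by positivity)
      have h6 : s * (-|Real.log D|) ≤ s * Real.log D := mul_le_mul_of_nonneg_left h3 (by linarith)
      linarith
  have hfr := frequently_lt_of_lt_limsup hcob (b := -ε) (by
    show -ε < pressure f s
    rw [hp]; linarith)
  refine ⟨ε, hεpos, (D * D ^ (s - 1))⁻¹, by positivity, ?_⟩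
  refine (hfr.and_eventually (eventually_ge_atTop 1)).mono ?_
  rintro n ⟨h1, h0⟩
  have hn : (1 : ℝ) ≤ n := by exact_mod_cast h0
  rw [inv_mul_eq_div, lt_div_iff₀ (by linarith), Real.lt_log_iff_exp_lt (hsp n)] at h1
  rw [← wsum_eq n (fun w => Metric.diam (compFam f w '' suppInt f) ^ s)] at h1
  have h2 : wsum n (fun w => Metric.diam (compFam f w '' suppInt f) ^ s) ≤
      wsum n (fun w => Metric.diam (compFam f w '' suppInt f) * (r ^ n * D) ^ (s - 1)) := by
    refine wsum_mono _ _ _ fun w hw => ?_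
    have h3 := hpos w
    have h4 := compFam_diam f hr.le hS w (suppInt f) hII.1.isBounded
    have h5 : 0 < Metric.diam (compFam f w '' suppInt f) := lt_of_lt_of_le (by positivity) h3
    rw [hw] at h4
    have : Metric.diam (compFam f w '' suppInt f) ^ s =
      Metric.diam (compFam f w '' suppInt f) * Metric.diam (compFam f w '' suppInt f) ^ (s - 1) := by
      rw [← Real.rpow_one_add' h5.le (by linarith)]; congr 1; ring
    rw [this]
    exact mul_le_mul_of_nonneg_left (Real.rpow_le_rpow h5.le h4 (by linarith)) h5.le
  rw [wsum_mul] at h2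
  have h3 := growth_spec hr.le hr1.le hS n _ hII
  have h4 : (r ^ n * D) ^ (s - 1) = Real.exp (-(2 * ε * n)) * D ^ (s - 1) := by
    rw [Real.mul_rpow (by positivity) hId.le]
    congr 1
    rw [Real.rpow_def_of_pos (by positivity), Real.log_pow, hε]
    congr 1; ring
  rw [h4] at h2
  rw [inv_mul_eq_div, div_le_iff₀ (by positivity)]
  have h5 : Real.exp (-ε * n) ≤ growth f (suppInt f) n * D * (Real.exp (-(2 * ε * n)) * D ^ (s - 1)) :=
    h1.le.trans (h2.trans (mul_le_mul_of_nonneg_right h3 (by positivity)))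
  have h6 : Real.exp (ε * n) = Real.exp (-ε * n) * Real.exp (2 * ε * n) := by
    rw [← Real.exp_add]; congr 1; ring
  have h7 : Real.exp (-(2 * ε * n)) * Real.exp (2 * ε * n) = 1 := by
    rw [← Real.exp_add]; simp
  rw [h6]
  refine (mul_le_mul_of_nonneg_right h5 (Real.exp_pos _).le).trans (le_of_eq ?_)
  linear_combination (growth f (suppInt f) n * D * D ^ (s - 1)) * h7

theorem pressure_pos {m : ℕ} (k0 : Fin m) {f : Fin m → ℝ → ℝ} {r s Q lam : ℝ} (hr : 0 < r) (hr1 : r < 1)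
    (hS : ∀ k x y, |f k x - f k y| ≤ r * |x - y|)
    (hII : IsCompact (suppInt f))
    (hs0 : 0 ≤ s) (hs : s ≤ 1) (hQ : 0 < Q) (hlam : 0 < lam)
    (hfr : ∃ᶠ n : ℕ in atTop,
      Q * Real.exp (lam * n) ≤ wsum n (fun w => Metric.diam (compFam f w '' suppInt f))) :
    0 < pressure f s := by
  set D := max 1 (Metric.diam (suppInt f)) with hD
  have hD1 : 1 ≤ D := le_max_left _ _
  have hm : 1 ≤ (m : ℝ) := by exact_mod_cast k0.pos
  have hdD : ∀ w : List (Fin m), Metric.diam (compFam f w '' suppInt f) ≤ D := fun w => by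
    have h4 := compFam_diam f hr.le hS w (suppInt f) hII.isBounded
    have h5 : r ^ w.length * Metric.diam (suppInt f) ≤ 1 * Metric.diam (suppInt f) :=
      mul_le_mul_of_nonneg_right (pow_le_one₀ hr.le hr1.le) Metric.diam_nonneg
    have := le_max_right 1 (Metric.diam (suppInt f))
    linarith
  have hbd : IsBoundedUnder (· ≤ ·) atTop (fun n : ℕ =>
      (n : ℝ)⁻¹ * Real.log (∑ w : Fin n → Fin m,
        Metric.diam (compFam f (List.ofFn w) '' suppInt f) ^ s)) := by
    refine isBoundedUnder_of ⟨Real.log m + Real.log D, fun n => ?_⟩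
    have hl1 := Real.log_nonneg hm
    have hl2 := Real.log_nonneg hD1
    have h2 : (∑ w : Fin n → Fin m,
        Metric.diam (compFam f (List.ofFn w) '' suppInt f) ^ s) ≤ m ^ n * D := by
      rw [← wsum_eq n (fun w => Metric.diam (compFam f w '' suppInt f) ^ s)]
      have := wsum_const (κ := Fin m) n D
      rw [Fintype.card_fin] at this
      rw [← this]
      refine wsum_mono _ _ _ fun w _ => ?_
      calc _ ≤ D ^ s := Real.rpow_le_rpow Metric.diam_nonneg (hdD w) hs0
        _ ≤ D ^ (1 : ℝ) := Real.rpow_le_rpow_of_exponent_le hD1 hs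
        _ = D := Real.rpow_one D
    have h0 : 0 ≤ ∑ w : Fin n → Fin m,
        Metric.diam (compFam f (List.ofFn w) '' suppInt f) ^ s :=
      Finset.sum_nonneg fun w _ => Real.rpow_nonneg Metric.diam_nonneg _
    show (n : ℝ)⁻¹ * _ ≤ _
    rcases Nat.eq_zero_or_pos n with hn | hn
    · subst hn; simp only [Nat.cast_zero, inv_zero, zero_mul]; linarith
    have h1 : (1 : ℝ) ≤ n := by exact_mod_cast hn
    rw [inv_mul_eq_div, div_le_iff₀ (by linarith)]
    rcases h0.eq_or_lt with h | h
    · rw [← h, Real.log_zero]; positivity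
    · have := Real.log_le_log h h2
      rw [Real.log_mul (by positivity) (by positivity), Real.log_pow] at this
      nlinarith
  have h0 : 0 < lam / 2 := by linarith
  refine h0.trans_le (le_limsup_of_frequently_le ?_ hbd)
  have hev : ∀ᶠ n : ℕ in atTop, 1 ≤ n ∧ Real.log (D / Q) ≤ lam / 2 * n := by
    refine (eventually_ge_atTop 1).and ?_
    have : Tendsto (fun n : ℕ => lam / 2 * (n : ℝ)) atTop atTop :=
      tendsto_natCast_atTop_atTop.const_mul_atTop h0
    exact this.eventually_ge_atTop _
  refine (hfr.and_eventually hev).mono ?_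
  rintro n ⟨h1, hn, h2⟩
  have hn1 : (1 : ℝ) ≤ n := by exact_mod_cast hn
  rw [← wsum_eq n (fun w => Metric.diam (compFam f w '' suppInt f) ^ s)]
  have h3 : wsum n (fun w => Metric.diam (compFam f w '' suppInt f)) ≤
      wsum n (fun w => Metric.diam (compFam f w '' suppInt f) ^ s * D) := by
    refine wsum_mono _ _ _ fun w _ => ?_
    set d := Metric.diam (compFam f w '' suppInt f)
    have hd0 : 0 ≤ d := Metric.diam_nonneg
    rcases hd0.eq_or_lt with h | h
    · rw [← h]; have := Real.rpow_nonneg (le_refl (0:ℝ)) s; positivity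
    · have e : d = d ^ s * d ^ (1 - s) := by
        rw [← Real.rpow_add h]; simp
      have : d ^ (1 - s) ≤ D := calc
        d ^ (1 - s) ≤ D ^ (1 - s) := Real.rpow_le_rpow hd0 (hdD w) (by linarith)
        _ ≤ D ^ (1 : ℝ) := Real.rpow_le_rpow_of_exponent_le hD1 (by linarith)
        _ = D := Real.rpow_one D
      calc d = d ^ s * d ^ (1 - s) := e
        _ ≤ _ := mul_le_mul_of_nonneg_left this (Real.rpow_nonneg hd0 _)
  rw [wsum_mul] at h3
  have hDp : 0 < D := by linarith
  have h4 : Real.exp (lam / 2 * n) ≤ wsum n (fun w => Metric.diam (compFam f w '' suppInt f) ^ s) := by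
    have h5 : Real.exp (lam * n) = Real.exp (lam / 2 * n) * Real.exp (lam / 2 * n) := by
      rw [← Real.exp_add]; congr 1; ring
    have h6 : D / Q ≤ Real.exp (lam / 2 * n) := (Real.log_le_iff_le_exp (by positivity)).1 h2
    rw [div_le_iff₀ hQ] at h6
    have h7 := h1.trans h3
    rw [h5] at h7
    have h8 := mul_le_mul_of_nonneg_right h6 (Real.exp_pos (lam / 2 * n)).le
    have h9 : Real.exp (lam / 2 * n) * D ≤
      wsum n (fun w => Metric.diam (compFam f w '' suppInt f) ^ s) * D := by linarith
    exact le_of_mul_le_mul_right h9 hDp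
  rw [inv_mul_eq_div, le_div_iff₀ (by linarith)]
  exact (Real.le_log_iff_exp_le ((Real.exp_pos _).trans_le h4)).2 h4

/-! comparison of cylinders -/

theorem pl_near {lk : ℕ} {b b' : Fin lk → ℝ} (hb' : StrictMono b')
    {ρ : Fin (lk + 1) → ℝ} {τ' u y0 : ℝ}
    (hbb : ∀ j, |b j - b' j| ≤ u) (hy : ∀ j, 8 * u < |y0 - b j|) (p q : ℝ)
    (hp : |p - y0| ≤ 3 * u) (hq : |q - y0| ≤ 3 * u) :
    |plFun b' ρ τ' p - plFun b' ρ τ' q| = |ρ (slopeIdx b y0)| * |p - q| := by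
  rw [plFun_lin hb' τ' q p (i := slopeIdx b y0), abs_mul]
  intro t ht
  have ht' : |t - y0| ≤ 3 * u := by
    have h1 := uIoc_subset_uIcc ht
    rw [mem_uIcc] at h1
    rw [abs_le] at hp hq ⊢
    rcases h1 with h1 | h1 <;> constructor <;> linarith [h1.1, h1.2]
  refine slopeIdx_congr fun j => ?_
  have h1 := hbb j
  have h2 := hy j
  rw [abs_le] at h1 ht'
  rcases lt_abs.1 h2 with h3 | h3
  · constructor <;> intro <;> linarith [h1.1, h1.2, ht'.1, ht'.2]
  · constructor <;> intro <;> linarith [h1.1, h1.2, ht'.1, ht'.2]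

theorem compare {m : ℕ} {l : Fin m → ℕ} {ρ : RSpace m l} {b b' : BSpace m l} {τ τ' : Fin m → ℝ}
    (hb : ∀ k, StrictMono (b k)) (hb' : ∀ k, StrictMono (b' k)) {r c d u η : ℝ} (hr : 0 < r)
    (hr1 : r < 1) (hρ : ∀ k i, |ρ k i| ≤ r) (hc : 0 < c) (hc1 : c ≤ 1)
    (hρc : ∀ k i, c * (l k + 1) ≤ |ρ k i|)
    (hd : ∀ k x, |paramFun m l (b, τ, ρ) k x - paramFun m l (b', τ', ρ) k x| ≤ d)
    (hdu : d ≤ (1 - r) * (3 * u)) (hu : 0 < u) (hη : 8 * u ≤ η)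
    (hbb : ∀ k j, |b k j - b' k j| ≤ u) {x : ℝ} {U V : Set ℝ}
    (hU : IsCompact U) (hU2 : IsConnected U) (hV : IsCompact V) (hV2 : IsConnected V)
    (hUx : ∀ y ∈ U, |y - x| ≤ u) (hVx : ∀ y ∈ V, |y - x| ≤ 3 * u) (w : List (Fin m)) :
    Metric.diam V * c ^ (∑ j : (Σ k : Fin m, Fin (l k)),
        hits (paramFun m l (b, τ, ρ)) (b j.1 j.2) η w x) *
      Metric.diam (compFam (paramFun m l (b, τ, ρ)) w '' U) ≤
      Metric.diam (compFam (paramFun m l (b', τ', ρ)) w '' V) * Metric.diam U := by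
  classical
  set f := paramFun m l (b, τ, ρ) with hf
  set f' := paramFun m l (b', τ', ρ) with hf'
  have hS : ∀ k x y, |f k x - f k y| ≤ r * |x - y| := fun k x y =>
    plFun_lip (hb k) (hρ k) (τ k) x y
  have hS' : ∀ k x y, |f' k x - f' k y| ≤ r * |x - y| := fun k x y =>
    plFun_lip (hb' k) (hρ k) (τ' k) x y
  induction w with
  | nil => simp [hits, compFam]
  | cons k w ih =>
    have hcU := compFam_continuous f hr.le hS w
    have hcV := compFam_continuous f' hr.le hS' w
    set A := compFam f w '' U with hA
    set B := compFam f' w '' V with hB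
    have hAc : IsCompact A := hU.image hcU
    have hBc : IsCompact B := hV.image hcV
    have hBn : IsConnected B := hV2.image _ hcV.continuousOn
    have eA : compFam f (k :: w) '' U = f k '' A := by rw [compFam_cons', image_comp]
    have eB : compFam f' (k :: w) '' V = f' k '' B := by rw [compFam_cons', image_comp]
    rw [eA, eB]
    set H := ∑ j : (Σ k : Fin m, Fin (l k)), hits f (b j.1 j.2) η w x with hH
    have hd0 : ∀ W : Set ℝ, 0 ≤ Metric.diam W := fun W => Metric.diam_nonneg
    have hcl := fun y => (compFam_dist f hr.le hS w y x)
    have hcont' : ∀ k, Continuous (f' k) := fun k => by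
      have := compFam_continuous f' hr.le hS' [k]
      simpa [compFam] using this
    have hAx : ∀ p ∈ A, |p - compFam f w x| ≤ u := by
      rintro p ⟨y, hy, rfl⟩
      have h1 := compFam_dist f hr.le hS w y x
      have h2 : r ^ w.length * |y - x| ≤ 1 * |y - x| :=
        mul_le_mul_of_nonneg_right (pow_le_one₀ hr.le hr1.le) (abs_nonneg _)
      linarith [hUx y hy]
    have hBx : ∀ p ∈ B, |p - compFam f w x| ≤ 3 * u := by
      rintro p ⟨y, hy, rfl⟩
      rw [abs_sub_comm]
      exact compFam_track f f' hr.le hS hd hdu w x y (by rw [abs_sub_comm]; exact hVx y hy)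
    by_cases hit : ∃ j : Fin (l k), |compFam f w x - b k j| ≤ η
    · obtain ⟨j, hj⟩ := hit
      have h1 : H + 1 ≤ ∑ j : (Σ k : Fin m, Fin (l k)), hits f (b j.1 j.2) η (k :: w) x := by
        simp only [hits, Finset.sum_add_distrib]
        have := Finset.single_le_sum (f := fun j : (Σ k : Fin m, Fin (l k)) =>
          if |compFam f w x - b j.1 j.2| ≤ η then 1 else 0) (fun _ _ => Nat.zero_le _)
          (Finset.mem_univ (⟨k, j⟩ : Σ k : Fin m, Fin (l k)))
        simp only [hj, if_true] at this
        refine Nat.add_le_add (le_of_eq hH) ?_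
        convert this
      have h2 : c ^ (∑ j : (Σ k : Fin m, Fin (l k)), hits f (b j.1 j.2) η (k :: w) x) ≤ c ^ H * c := by
        rw [← pow_succ]; exact pow_le_pow_of_le_one hc.le hc1 h1
      have h3 : Metric.diam (f k '' A) ≤ Metric.diam A := by
        have := compFam_diam f hr.le hS [k] A hAc.isBounded
        have e : compFam f [k] = f k := rfl
        rw [e] at this
        have h4 := hd0 A
        simp only [List.length_cons, List.length_nil, zero_add, pow_one] at this
        nlinarith
      have h4 : c * Metric.diam B ≤ Metric.diam (f' k '' B) :=
        plFun_diam_lower (hb' k) (fun i => (hρ k i).trans hr1.le) hc.le (hρc k) (τ' k) B hBc hBn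
      calc _ ≤ Metric.diam V * (c ^ H * c) * Metric.diam A := by
            gcongr <;> first | exact hd0 _ | skip
        _ = c * (Metric.diam V * c ^ H * Metric.diam A) := by ring
        _ ≤ c * (Metric.diam B * Metric.diam U) := mul_le_mul_of_nonneg_left ih hc.le
        _ = (c * Metric.diam B) * Metric.diam U := by ring
        _ ≤ _ := mul_le_mul_of_nonneg_right h4 (hd0 _)
    · push Not at hit
      have h1 : H ≤ ∑ j : (Σ k : Fin m, Fin (l k)), hits f (b j.1 j.2) η (k :: w) x :=
        Finset.sum_le_sum fun j _ => by rw [hits]; exact Nat.le_add_right _ _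
      have h2 : c ^ (∑ j : (Σ k : Fin m, Fin (l k)), hits f (b j.1 j.2) η (k :: w) x) ≤ c ^ H :=
        pow_le_pow_of_le_one hc.le hc1 h1
      have hy : ∀ j, 8 * u < |compFam f w x - b k j| := fun j => lt_of_le_of_lt hη (hit j)
      set q := |ρ k (slopeIdx (b k) (compFam f w x))| with hq
      have hq0 : 0 < q := lt_of_lt_of_le (by positivity) (hρc k _)
      have h3 : Metric.diam (f k '' A) ≤ q * Metric.diam A := by
        refine Metric.diam_le_of_forall_dist_le (mul_nonneg hq0.le (hd0 _)) ?_
        rintro _ ⟨p, hp, rfl⟩ _ ⟨p', hp', rfl⟩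
        have := pl_near (b := b k) (hb k) (ρ := ρ k) (τ' := τ k) (u := u) (y0 := compFam f w x)
          (by intro j; simp [hu.le]) hy p p' (by linarith [hAx p hp]) (by linarith [hAx p' hp'])
        rw [Real.dist_eq]
        refine (le_of_eq this).trans ?_
        rw [← Real.dist_eq]
        exact mul_le_mul_of_nonneg_left (Metric.dist_le_diam_of_mem hAc.isBounded hp hp') hq0.le
      have h4 : q * Metric.diam B ≤ Metric.diam (f' k '' B) := by
        rw [mul_comm, ← le_div_iff₀ hq0]
        refine Metric.diam_le_of_forall_dist_le (div_nonneg (hd0 _) hq0.le) ?_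
        intro p hp p' hp'
        have := pl_near (b := b k) (hb' k) (ρ := ρ k) (τ' := τ' k) (u := u) (y0 := compFam f w x)
          (hbb k) hy p p' (hBx p hp) (hBx p' hp')
        rw [le_div_iff₀ hq0, mul_comm, Real.dist_eq]
        refine (le_of_eq this.symm).trans ?_
        have h5 := Metric.dist_le_diam_of_mem (hBc.image (hcont' k)).isBounded
          (mem_image_of_mem (f' k) hp) (mem_image_of_mem (f' k) hp')
        rw [Real.dist_eq] at h5
        exact h5
      calc _ ≤ Metric.diam V * c ^ H * (q * Metric.diam A) := by
            gcongr <;> first | exact hd0 _ | skip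
        _ = q * (Metric.diam V * c ^ H * Metric.diam A) := by ring
        _ ≤ q * (Metric.diam B * Metric.diam U) := mul_le_mul_of_nonneg_left ih hq0.le
        _ = (q * Metric.diam B) * Metric.diam U := by ring
        _ ≤ _ := mul_le_mul_of_nonneg_right h4 (hd0 _)

/-! the key lower bound -/

theorem exists_N {C K θ : ℝ} (hC : 0 ≤ C) (hK : 0 ≤ K) (hθ : 0 < θ) :
    ∃ N : ℕ, 1 ≤ N ∧ C + ((N : ℝ) + 1) ^ 2 * K ≤ Real.exp θ ^ N := by
  have h := tendsto_pow_const_div_const_pow_of_one_lt 2 (Real.one_lt_exp_iff.2 hθ)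
  have h1 : (0 : ℝ) < 1 / (C + 4 * K + 1) := by positivity
  obtain ⟨N, h2, h3⟩ := ((h.eventually_lt_const h1).and (eventually_ge_atTop 1)).exists
  refine ⟨N, h3, ?_⟩
  have hN : (1 : ℝ) ≤ N := by exact_mod_cast h3
  have hp : 0 < Real.exp θ ^ N := pow_pos (Real.exp_pos _) _
  rw [div_lt_div_iff₀ hp (by positivity), one_mul] at h2
  have h4 : C * 1 ≤ C * (N : ℝ) ^ 2 := mul_le_mul_of_nonneg_left (by nlinarith) hC
  have h5 : ((N : ℝ) + 1) ^ 2 * K ≤ (4 * (N : ℝ) ^ 2) * K :=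
    mul_le_mul_of_nonneg_right (by nlinarith) hK
  nlinarith [sq_nonneg (N : ℝ)]

theorem exists_eta {κ σ : Type} [Fintype κ] [Fintype σ] (S : κ → ℝ → ℝ) (β : σ → ℝ) (N : ℕ) :
    ∃ η > 0, ∀ j, ∀ w : List κ, w.length ≤ N →
      |compFam S w (β j) - β j| ≤ 2 * η → compFam S w (β j) = β j := by
  have hfin : {w : List κ | w.length ≤ N}.Finite := List.finite_length_le κ N
  have h : ∀ᶠ η : ℝ in nhdsWithin 0 (Ioi 0), ∀ j, ∀ w ∈ {w : List κ | w.length ≤ N},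
      |compFam S w (β j) - β j| ≤ 2 * η → compFam S w (β j) = β j := by
    rw [eventually_all]
    intro j
    rw [eventually_all_finite hfin]
    intro w _
    by_cases e : compFam S w (β j) = β j
    · exact Eventually.of_forall fun _ _ => e
    · have hpos : 0 < |compFam S w (β j) - β j| / 2 := by
        have := abs_pos.2 (sub_ne_zero.2 e); linarith
      filter_upwards [mem_nhdsWithin_of_mem_nhds (Iio_mem_nhds hpos)] with η h1 h2
      have h1' : η < |compFam S w (β j) - β j| / 2 := h1
      linarith
  obtain ⟨η, h1, h2⟩ := (h.and self_mem_nhdsWithin).exists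
  exact ⟨η, h2, fun j w hw => h1 j w hw⟩

theorem key_lower {κ σ : Type} [Fintype κ] [Fintype σ] {S : κ → ℝ → ℝ} {β : σ → ℝ} {r c L : ℝ}
    {I : Set ℝ} (hr : 0 < r) (hr1 : r < 1) (hc : 0 < c) (hc1 : c < 1)
    (hS : ∀ k x y, |S k x - S k y| ≤ r * |x - y|) (hI : ∀ k, S k '' I ⊆ I)
    (huniq : ∀ j, ∀ u v : List κ, u.length = v.length → compFam S u (β j) = β j →
      compFam S v (β j) = β j → u = v)
    (hL : 0 < L) (hLg : ∀ n : ℕ, Real.exp (L * n) ≤ growth S I n ∨ n = 0)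
    (hLu : ∀ θ > 0, ∃ C ≥ 0, ∀ n, growth S I n ≤ C * Real.exp (L + θ) ^ n) :
    ∃ N : ℕ, 1 ≤ N ∧ ∃ η > 0, ∀ u > 0, ∀ᶠ M : ℕ in atTop, ∃ U, Ivl I U ∧ 0 < Metric.diam U ∧
      Metric.diam U ≤ u ∧ ∀ x, Real.exp (L / 2 * ((M * N : ℕ) : ℝ)) / 4 * Metric.diam U ≤
        wsum (M * N) (fun w => c ^ (∑ j, hits S (β j) η w x) * Metric.diam (compFam S w '' U)) := by
  classical
  have hlc : 0 < -Real.log c := by have := Real.log_neg hc hc1; linarith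
  have hlr : 0 < -Real.log r := by have := Real.log_neg hr hr1; linarith
  set nB : ℝ := (Fintype.card σ : ℝ) with hnB
  have hnB0 : 0 ≤ nB := Nat.cast_nonneg _
  set k := L / (2 * (nB + 1) * (-Real.log c)) with hk
  have hk0 : 0 < k := by positivity
  set θ := k * (-Real.log r) / 3 with hθ
  have hθ0 : 0 < θ := by positivity
  obtain ⟨C, hC, hCu⟩ := hLu θ hθ0
  obtain ⟨N, hN1, hN⟩ := exists_N (K := r⁻¹ * C ^ 2) hC (by positivity) hθ0
  obtain ⟨η, hη0, hη⟩ := exists_eta S β N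
  refine ⟨N, hN1, η, hη0, fun u hu => ?_⟩
  set A := Real.exp (L + 2 * θ) ^ N with hA
  have hblock : ∀ j, ∀ x U, Ivl I U →
      wsum N (fun w => Metric.diam (compFam S w '' U) * r⁻¹ ^ hits S (β j) η w x) ≤
        A * Metric.diam U := by
    intro j x U hU
    refine (block_bound hr hr1.le hS hI (hη j) (huniq j) (fun n => growth_nonneg n)
      (fun n U hU => growth_spec hr.le hr1.le hS n U hU) hC
      (Real.one_le_exp (by positivity)) hCu x U hU).trans ?_
    refine mul_le_mul_of_nonneg_right ?_ Metric.diam_nonneg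
    refine (mul_le_mul_of_nonneg_right hN (by positivity)).trans (le_of_eq ?_)
    rw [hA, ← mul_pow, ← Real.exp_add]; congr 2; ring
  have hiter := fun j => block_iter (S := S) (β := β j) (η := η) hr (inv_nonneg.2 hr.le)
    (by positivity : 0 ≤ A) hS hI (hblock j)
  have hev : ∀ᶠ M : ℕ in atTop, 1 ≤ M ∧ Real.log (4 * (nB + 1)) ≤ θ * M := by
    refine (eventually_ge_atTop 1).and ?_
    have : Tendsto (fun n : ℕ => θ * (n : ℝ)) atTop atTop :=
      tendsto_natCast_atTop_atTop.const_mul_atTop hθ0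
    exact this.eventually_ge_atTop _
  filter_upwards [hev] with M hM
  obtain ⟨hM1, hM2⟩ := hM
  set n := M * N with hn
  have hnpos : 0 < n := Nat.mul_pos hM1 hN1
  have hMn : (M : ℝ) ≤ n := by exact_mod_cast Nat.le_mul_of_pos_right M hN1
  have hAM : A ^ M = Real.exp ((L + 2 * θ) * n) := by
    rw [hA, ← pow_mul, ← Real.exp_nat_mul]; congr 1; rw [hn, Nat.mul_comm]; ring
  have hg : Real.exp (L * n) / 2 < growth S I n := by
    rcases hLg n with h | h
    · have := Real.exp_pos (L * n); linarith
    · omega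
  obtain ⟨U, hU, hUd, hUu, hUs⟩ := growth_small hr.le hS n hu (by positivity) hg
  refine ⟨U, hU, hUd, hUu, fun x => ?_⟩
  set dU := Metric.diam U with hdU
  set X := Real.exp (-(L / 2 * n)) with hX
  have hX0 : 0 < X := Real.exp_pos _
  have hz : 1 ≤ r⁻¹ := (one_le_inv₀ hr).2 hr1.le
  have hz3 : ∀ h : ℕ, k * n < h → 1 ≤ Real.exp (-(3 * θ * n)) * r⁻¹ ^ h := by
    intro h hh
    have e : r⁻¹ ^ h = Real.exp (h * (-Real.log r)) := by
      rw [Real.exp_nat_mul, Real.exp_neg, Real.exp_log hr]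
    rw [e, ← Real.exp_add]
    apply Real.one_le_exp
    have : 3 * θ = k * (-Real.log r) := by rw [hθ]; ring
    rw [this]
    nlinarith
  have hpt : ∀ w : List κ, w.length = n → X * Metric.diam (compFam S w '' U) ≤
      c ^ (∑ j, hits S (β j) η w x) * Metric.diam (compFam S w '' U) +
      ∑ j, X * Real.exp (-(3 * θ * n)) *
        (Metric.diam (compFam S w '' U) * r⁻¹ ^ hits S (β j) η w x) := by
    intro w _
    set d := Metric.diam (compFam S w '' U)
    have hd : 0 ≤ d := Metric.diam_nonneg
    have hnn : ∀ j ∈ Finset.univ, 0 ≤ X * Real.exp (-(3 * θ * n)) * (d * r⁻¹ ^ hits S (β j) η w x) :=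
      fun j _ => by positivity
    by_cases hh : ∃ j, k * n < hits S (β j) η w x
    · obtain ⟨j, hj⟩ := hh
      have h1 := Finset.single_le_sum hnn (Finset.mem_univ j)
      have h2 := mul_le_mul_of_nonneg_left (hz3 _ hj) (mul_nonneg hX0.le hd)
      have h3 : 0 ≤ c ^ (∑ j, hits S (β j) η w x) * d := by positivity
      refine le_trans ?_ (add_le_add h3 h1)
      calc X * d = X * d * 1 := by ring
        _ ≤ _ := h2
        _ = _ := by ring
    · push Not at hh
      have h1 := Finset.sum_nonneg hnn
      have h2 : X ≤ c ^ (∑ j, hits S (β j) η w x) := by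
        have e : c ^ (∑ j, hits S (β j) η w x) =
            Real.exp (((∑ j, hits S (β j) η w x : ℕ) : ℝ) * Real.log c) := by
          rw [Real.exp_nat_mul, Real.exp_log hc]
        rw [e, hX, Real.exp_le_exp]
        have h3 : ((∑ j, hits S (β j) η w x : ℕ) : ℝ) ≤ nB * (k * n) := by
          push_cast
          refine (Finset.sum_le_sum fun j _ => hh j).trans (le_of_eq ?_)
          simp [hnB]
        have h4 : (nB + 1) * k * (-Real.log c) = L / 2 := by
          have : k * (2 * (nB + 1) * (-Real.log c)) = L := div_mul_cancel₀ _ (by positivity)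
          linarith
        have h5 : nB * (k * n) ≤ (nB + 1) * k * n := by
          have : 0 ≤ k * n := by positivity
          linarith
        have h6 := mul_le_mul_of_nonneg_right (h3.trans h5) hlc.le
        have h7 : (nB + 1) * k * n * (-Real.log c) = L / 2 * n := by rw [← h4]; ring
        linarith
      have := mul_le_mul_of_nonneg_right h2 hd
      linarith
  have hsum := wsum_mono n _ _ hpt
  rw [wsum_mul_left, wsum_add, wsum_sum] at hsum
  set G := wsum n (fun w => c ^ (∑ j, hits S (β j) η w x) * Metric.diam (compFam S w '' U)) with hG
  have hbad : ∑ j, wsum n (fun w => X * Real.exp (-(3 * θ * n)) *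
        (Metric.diam (compFam S w '' U) * r⁻¹ ^ hits S (β j) η w x)) ≤
      nB * (X * Real.exp (-(3 * θ * n)) * (Real.exp ((L + 2 * θ) * n) * dU)) := by
    refine (Finset.sum_le_sum (g := fun _ => X * Real.exp (-(3 * θ * n)) *
      (Real.exp ((L + 2 * θ) * n) * dU)) fun j _ => ?_).trans (le_of_eq ?_)
    · rw [wsum_mul_left, ← hAM]
      exact mul_le_mul_of_nonneg_left (hiter j M x U hU) (by positivity)
    · simp [hnB]
  have e1 : Real.exp (-(3 * θ * n)) * Real.exp ((L + 2 * θ) * n) =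
      Real.exp (L * n) * Real.exp (-(θ * n)) := by
    rw [← Real.exp_add, ← Real.exp_add]; congr 1; ring
  have e2 : nB * Real.exp (-(θ * n)) ≤ 1 / 4 := by
    have h1 : 4 * (nB + 1) ≤ Real.exp (θ * n) := by
      refine (Real.log_le_iff_le_exp (by positivity)).1 (hM2.trans ?_)
      exact mul_le_mul_of_nonneg_left hMn hθ0.le
    rw [Real.exp_neg, ← div_eq_mul_inv, div_le_iff₀ (Real.exp_pos _)]
    linarith
  have e3 : X * Real.exp (L * n) = Real.exp (L / 2 * n) := by
    rw [hX, ← Real.exp_add]; congr 1; ring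
  have e4 : nB * (X * Real.exp (-(3 * θ * n)) * (Real.exp ((L + 2 * θ) * n) * dU)) ≤
      1 / 4 * (Real.exp (L / 2 * n) * dU) := by
    rw [← e3]
    calc _ = nB * X * dU * (Real.exp (-(3 * θ * n)) * Real.exp ((L + 2 * θ) * n)) := by ring
      _ = (nB * Real.exp (-(θ * n))) * (X * Real.exp (L * n) * dU) := by rw [e1]; ring
      _ ≤ _ := mul_le_mul_of_nonneg_right e2 (by positivity)
  have e5 := mul_le_mul_of_nonneg_left hUs hX0.le
  have e6 : X * (Real.exp (L * n) / 2 * dU) = 1 / 2 * (Real.exp (L / 2 * n) * dU) := by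
    rw [← e3]; ring
  rw [e6] at e5
  linarith

theorem exists_consts {m : ℕ} {l : Fin m → ℕ} (ρ : RSpace m l)
    (hρ : ∀ k i, ρ k i ≠ 0 ∧ |ρ k i| < 1) :
    ∃ r c : ℝ, 0 < r ∧ r < 1 ∧ 0 < c ∧ c < 1 ∧ (∀ k i, |ρ k i| ≤ r) ∧
      ∀ k i, c * (l k + 1) ≤ |ρ k i| := by
  have h1 : ∀ᶠ r : ℝ in nhdsWithin 1 (Iio 1), ∀ k i, |ρ k i| ≤ r := by
    rw [eventually_all]; intro k; rw [eventually_all]; intro i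
    filter_upwards [mem_nhdsWithin_of_mem_nhds (Ioi_mem_nhds (hρ k i).2)] with r hr
    exact le_of_lt hr
  have h2 : ∀ᶠ c : ℝ in nhdsWithin 0 (Ioi 0), ∀ k i, c * (l k + 1) ≤ |ρ k i| := by
    rw [eventually_all]; intro k; rw [eventually_all]; intro i
    have hp : 0 < |ρ k i| / (l k + 1) := div_pos (abs_pos.2 (hρ k i).1) (by positivity)
    filter_upwards [mem_nhdsWithin_of_mem_nhds (Iio_mem_nhds hp)] with c hc
    exact (le_div_iff₀ (by positivity)).1 (le_of_lt hc)
  obtain ⟨r, ⟨hr, hr0⟩, hr1⟩ := ((h1.and (mem_nhdsWithin_of_mem_nhds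
    (Ioi_mem_nhds (zero_lt_one (α := ℝ))))).and self_mem_nhdsWithin).exists
  obtain ⟨c, ⟨hc, hc1⟩, hc0⟩ := ((h2.and (mem_nhdsWithin_of_mem_nhds
    (Iio_mem_nhds (zero_lt_one (α := ℝ))))).and self_mem_nhdsWithin).exists
  exact ⟨r, c, hr0, hr1, hc0, hc1, hr, hc⟩

/-- Fix a type `ℓ` and a vector of slopes `ρ ∈ R^ℓ`.  Let
`(b, τ) ∈ B^ℓ × ℝ^m` be such that the self-similar IFS generated by `F^{(b,τ,ρ)}` satisfies
the Exponential Separation Condition and the natural dimension satisfies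
`s_{(b,τ,ρ)} > 1`.  Then there exists `δ > 0` such that for every
`(b̂, τ̂) ∈ B^ℓ × ℝ^m` with `|(b̂, τ̂) - (b, τ)| < δ` one has `s_{(b̂,τ̂,ρ)} > 1`. -/
theorem natDim_gt_one_stable
    {m : ℕ} {l : Fin m → ℕ} (hm : 2 ≤ m)
    (ρ : RSpace m l)
    (hρ : ∀ k i, ρ k i ≠ 0 ∧ |ρ k i| < 1)
    (hconsec : ∀ k (i : Fin (l k)), ρ k i.castSucc ≠ ρ k i.succ)
    (b : BSpace m l) (τ : Fin m → ℝ) (hb : ∀ k, StrictMono (b k))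
    (hesc : ∃ t : (k : Fin m) → Fin (l k + 1) → ℝ,
      (∀ (k : Fin m) (i : Fin (l k + 1)) (x : ℝ),
        (∀ j : Fin (l k), (j : ℕ) < (i : ℕ) → b k j < x) →
        (∀ j : Fin (l k), (i : ℕ) ≤ (j : ℕ) → x < b k j) →
        paramFun m l (b, τ, ρ) k x = ρ k i * x + t k i) ∧
      ESCfam (fun q : Σ k : Fin m, Fin (l k + 1) => ρ q.1 q.2)
             (fun q : Σ k : Fin m, Fin (l k + 1) => t q.1 q.2))
    (sF : ℝ) (hsF0 : 0 ≤ sF)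
    (hsF : pressure (paramFun m l (b, τ, ρ)) sF = 0) (hsF1 : 1 < sF) :
    ∃ δ > (0 : ℝ), ∀ (b' : BSpace m l) (τ' : Fin m → ℝ),
      (∀ k, StrictMono (b' k)) →
      dist ((b', τ') : BSpace m l × (Fin m → ℝ)) (b, τ) < δ →
      ∀ s' : ℝ, 0 ≤ s' → pressure (paramFun m l (b', τ', ρ)) s' = 0 → 1 < s' := by
  classical
  obtain ⟨r, c, hr, hr1, hc, hc1, hρr, hρc⟩ := exists_consts ρ hρ
  set f := paramFun m l (b, τ, ρ) with hf
  have k0 : Fin m := ⟨0, by omega⟩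
  haveI : Nonempty (Fin m) := ⟨k0⟩
  have hS : ∀ k x y, |f k x - f k y| ≤ r * |x - y| := fun k x y =>
    plFun_lip (hb k) (hρr k) (τ k) x y
  have hlow : ∀ k U, IsCompact U → IsConnected U → c * Metric.diam U ≤ Metric.diam (f k '' U) :=
    fun k U h1 h2 => plFun_diam_lower (hb k) (hρr k) hc.le (hρc k) (τ k) U h1 h2
  have hnofix : ¬ ∃ φ : ℝ, ∀ k, f k φ = φ := by
    rintro ⟨φ, hφ⟩
    have := esc_unique ρ b τ hb hesc φ [⟨0, by omega⟩] [⟨1, by omega⟩] rfl (hφ _) (hφ _)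
    simp at this
  obtain ⟨A, B, hAB, hsI, hinv⟩ := suppInt_spec k0 hr.le hr1 hS
  have hII : Ivl (suppInt f) (suppInt f) := by
    rw [hsI]; exact ⟨isCompact_Icc, isConnected_Icc hAB.le, subset_rfl⟩
  have hId : 0 < Metric.diam (suppInt f) := by
    rw [hsI, Real.diam_Icc hAB.le]; linarith
  have hinv' : ∀ k, f k '' suppInt f ⊆ suppInt f := by rw [hsI]; exact hinv
  obtain ⟨ε, hε, K, hK, hfr⟩ := pressure_freq k0 hr hr1 hc hc1.le hS hlow hII hId hsF1 hsF
  obtain ⟨L, hL, hLg, hLu⟩ := fekete_mul hc (growth_lower hr.le hr1.le hc.le hS hlow hII hId)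
    (growth_add_le hr.le hr1.le hS hinv') hε hK hfr
  obtain ⟨N, hN1, η, hη, hkey⟩ := key_lower (σ := Σ k : Fin m, Fin (l k))
    (β := fun j => b j.1 j.2) hr hr1 hc hc1 hS hinv'
    (fun j => esc_unique ρ b τ hb hesc _) hL hLg hLu
  set u := min (η / 8) ((B - A) / 4) with hu
  have hu0 : 0 < u := lt_min (by linarith) (by linarith)
  have hu1 : 8 * u ≤ η := by have := min_le_left (η / 8) ((B - A) / 4); linarith
  have hu2 : 4 * u ≤ B - A := by have := min_le_right (η / 8) ((B - A) / 4); linarith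
  set T : ℝ := 1 + 4 * ∑ k, (l k : ℝ) with hT
  have hsl : 0 ≤ ∑ k, (l k : ℝ) := Finset.sum_nonneg fun _ _ => Nat.cast_nonneg _
  have hT0 : 0 < T := by positivity
  have h1r : 0 < 1 - r := by linarith
  refine ⟨min u ((1 - r) * u / T), lt_min hu0 (by positivity), ?_⟩
  intro b' τ' hb' hdist s' hs0 hps
  by_contra hs1
  push Not at hs1
  set f' := paramFun m l (b', τ', ρ) with hf'
  have hS' : ∀ k x y, |f' k x - f' k y| ≤ r * |x - y| := fun k x y =>
    plFun_lip (hb' k) (hρr k) (τ' k) x y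
  set δ := min u ((1 - r) * u / T) with hδ
  have hδ1 : δ ≤ u := min_le_left _ _
  have hδ2 : T * δ ≤ (1 - r) * u := by
    have : δ ≤ (1 - r) * u / T := min_le_right _ _
    rw [le_div_iff₀ hT0] at this; linarith
  have hδ0 : 0 < δ := lt_min hu0 (by positivity)
  rw [Prod.dist_eq, max_lt_iff] at hdist
  have hbb : ∀ k j, |b k j - b' k j| ≤ δ := fun k j => by
    rw [abs_sub_comm, ← Real.dist_eq]
    exact (dist_le_pi_dist (b' k) (b k) j).trans ((dist_le_pi_dist b' b k).trans hdist.1.le)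
  have hττ : ∀ k, |τ k - τ' k| ≤ δ := fun k => by
    rw [abs_sub_comm, ← Real.dist_eq]
    exact (dist_le_pi_dist τ' τ k).trans hdist.2.le
  have hd : ∀ k x, |f k x - f' k x| ≤ (1 - r) * u := by
    intro k x
    have h1 := plFun_perturb (hb k) (hb' k) (fun i => (hρr k i).trans hr1.le) (hbb k) (hττ k) x
    have h2 : (l k : ℝ) ≤ ∑ k, (l k : ℝ) :=
      Finset.single_le_sum (f := fun k => (l k : ℝ)) (fun _ _ => Nat.cast_nonneg _)
        (Finset.mem_univ k)
    have h3 : (1 + 4 * (l k : ℝ)) * δ ≤ T * δ :=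
      mul_le_mul_of_nonneg_right (by linarith) hδ0.le
    exact h1.trans (h3.trans hδ2)
  obtain ⟨A', B', hAB', hsI', hinv2⟩ := suppInt_spec k0 hr.le hr1 hS'
  have hsub : Icc A B ⊆ Icc (A' - u) (B' + u) := by
    rw [← hsI]
    refine suppInt_min hnofix (by linarith) ?_
    rintro k _ ⟨y, hy, rfl⟩
    set y' := max A' (min y B') with hy'
    have hy1 : y' ∈ Icc A' B' := ⟨le_max_left _ _, max_le hAB'.le (min_le_right _ _)⟩
    have hy2 : |y - y'| ≤ u := by
      rw [hy', abs_le]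
      rcases le_total y B' with h | h
      · rw [min_eq_left h]
        rcases le_total A' y with h' | h'
        · rw [max_eq_right h']; constructor <;> linarith
        · rw [max_eq_left h']; constructor <;> linarith [hy.1]
      · rw [min_eq_right h, max_eq_right hAB'.le]; constructor <;> linarith [hy.2]
    have h1 := hinv2 k (mem_image_of_mem (f' k) hy1)
    have h2 := abs_le.1 (hS k y y')
    have h3 := abs_le.1 (hd k y')
    have h4 := mul_le_mul_of_nonneg_left hy2 hr.le
    constructor <;> linarith [h1.1, h1.2, h2.1, h2.2, h3.1, h3.2]
  have hA' : A' - u ≤ A := (hsub (left_mem_Icc.2 hAB.le)).1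
  have hB' : B ≤ B' + u := (hsub (right_mem_Icc.2 hAB.le)).2
  have hev := hkey u hu0
  have hfinal : ∀ᶠ M : ℕ in atTop, u / 4 * Real.exp (L / 2 * ((M * N : ℕ) : ℝ)) ≤
      wsum (M * N) (fun w => Metric.diam (compFam f' w '' suppInt f')) := by
    filter_upwards [hev] with M hM
    obtain ⟨U, hU, hU0, hUu, hUs⟩ := hM
    obtain ⟨x, hx⟩ := hU.2.1.nonempty
    have hxI : x ∈ Icc A B := by rw [← hsI]; exact hU.2.2 hx
    obtain ⟨x', hx1, hx2, hx3, hx4⟩ : ∃ x', A + u ≤ x' ∧ x' + u ≤ B - u ∧ x - x' ≤ 2 * u ∧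
        x' - x ≤ u := by
      refine ⟨max (A + u) (min x (B - 2 * u)), le_max_left _ _, ?_, ?_, ?_⟩
      · have : max (A + u) (min x (B - 2 * u)) ≤ B - 2 * u :=
          max_le (by linarith) (min_le_right _ _)
        linarith
      · rcases le_total x (B - 2 * u) with h | h
        · rw [min_eq_left h]; linarith [le_max_right (A + u) x]
        · rw [min_eq_right h]; linarith [le_max_right (A + u) (B - 2 * u), hxI.2]
      · have : max (A + u) (min x (B - 2 * u)) ≤ x + u :=
          max_le (by linarith [hxI.1]) (by linarith [min_le_left x (B - 2 * u)])
        linarith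
    have hVd : Metric.diam (Icc x' (x' + u)) = u := by
      rw [Real.diam_Icc (by linarith)]; ring
    have hVI : Icc x' (x' + u) ⊆ suppInt f' := by
      rw [hsI']; exact Icc_subset_Icc (by linarith) (by linarith)
    have hcomp := compare (τ := τ) (τ' := τ') (x := x) (U := U) (V := Icc x' (x' + u)) hb hb' hr hr1
      hρr hc hc1.le hρc hd (by nlinarith) hu0 hu1
      (fun k j => (hbb k j).trans hδ1) hU.1 hU.2.1 isCompact_Icc (isConnected_Icc (by linarith))
      (fun y hy => by
        rw [← Real.dist_eq]
        exact (Metric.dist_le_diam_of_mem hU.1.isBounded hy hx).trans hUu)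
      (fun y hy => by rw [abs_le]; constructor <;> linarith [hy.1, hy.2])
    have h1 : wsum (M * N) (fun w => u * (c ^ (∑ j : (Σ k : Fin m, Fin (l k)),
          hits f (b j.1 j.2) η w x) * Metric.diam (compFam f w '' U))) ≤
        wsum (M * N) (fun w => Metric.diam (compFam f' w '' suppInt f') * Metric.diam U) := by
      refine wsum_mono _ _ _ fun w _ => ?_
      have h2 := hcomp w
      rw [hVd, mul_assoc] at h2
      refine h2.trans (mul_le_mul_of_nonneg_right ?_ hU0.le)
      refine Metric.diam_mono (image_mono hVI) ?_
      have hcI : IsCompact (suppInt f') := by rw [hsI']; exact isCompact_Icc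
      exact (hcI.image (compFam_continuous f' hr.le hS' w)).isBounded
    rw [wsum_mul_left, wsum_mul] at h1
    have h3 := (mul_le_mul_of_nonneg_left (hUs x) hu0.le).trans h1
    refine le_of_mul_le_mul_right ?_ hU0
    refine le_trans (le_of_eq ?_) h3
    ring
  have hfreq : ∃ᶠ n : ℕ in atTop, u / 4 * Real.exp (L / 2 * n) ≤
      wsum n (fun w => Metric.diam (compFam f' w '' suppInt f')) := by
    have ht : Tendsto (fun M : ℕ => M * N) atTop atTop :=
      tendsto_id.atTop_mul_const' hN1
    exact ht.frequently hfinal.frequently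
  have hcI : IsCompact (suppInt f') := by rw [hsI']; exact isCompact_Icc
  have := pressure_pos k0 hr hr1 hS' hcI hs0 hs1 (by positivity) (by positivity) hfreq
  rw [hps] at this
  exact lt_irrefl _ this

end
end

section
/- Let A, B, S : ℝ → ℝ be affine maps (each of the form x ↦ a·x + c). Suppose there exist points d, p ∈ ℝ with S(d) = p and A(p) = B(p) = d. Then B∘S∘A∘S = A∘S∘B∘S as functions on ℝ. -/
/-- Let `A, B, S : ℝ → ℝ` be affine maps. Suppose there are points
`d, p ∈ ℝ` with `S d = p` and `A p = B p = d`. Then `B ∘ S ∘ A ∘ S = A ∘ S ∘ B ∘ S`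
as functions on `ℝ`. -/
theorem affine_commuting_identity
    (A B S : ℝ → ℝ)
    (hA : ∃ a c : ℝ, ∀ x, A x = a * x + c)
    (hB : ∃ a c : ℝ, ∀ x, B x = a * x + c)
    (hS : ∃ a c : ℝ, ∀ x, S x = a * x + c)
    (d p : ℝ)
    (hSd : S d = p) (hAp : A p = d) (hBp : B p = d) :
    B ∘ S ∘ A ∘ S = A ∘ S ∘ B ∘ S := by
  obtain ⟨a, c, hA⟩ := hA
  obtain ⟨b, e, hB⟩ := hB
  obtain ⟨s, t, hS⟩ := hS
  rw [hS] at hSd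
  rw [hA] at hAp
  rw [hB] at hBp
  obtain rfl : c = d - a * p := by linarith
  obtain rfl : e = d - b * p := by linarith
  obtain rfl : t = p - s * d := by linarith
  funext x
  simp only [Function.comp_apply, hA, hB, hS]
  ring
end

section
/- Let f_1(x) = (2/5)x for x ≤ 0 and f_1(x) = (1/5)x for x ≥ 0, let f_2(x) = x/3, and let F = {f_1, f_2} with natural pressure Φ. Then for every s > 0, Φ(s) > log((1/3)^s + (1/5)^s). Consequently, the natural dimension s_F of F is strictly greater than the unique r > 0 with (1/3)^r + (1/5)^r = 1; since for every ε > 0 the CPLIFS F̂_ε = {f_1, x ↦ x/3 + ε} has natural dimension exactly r, the natural dimension is not continuous at F (the gap s_F − r is independent of ε). -/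
open Set Filter MeasureTheory

noncomputable section

/-- The piecewise linear map `f₁(x) = (2/5)x` for `x ≤ 0` and `f₁(x) = (1/5)x` for
`x ≥ 0`. -/
def g1 : ℝ → ℝ := fun x => if x ≤ 0 then 2 / 5 * x else 1 / 5 * x

theorem pressure_eq_aux (f : Fin 2 → ℝ → ℝ) (s : ℝ) (hs : 0 ≤ s) (c C : ℝ) (hc : 0 < c)
    (hC : 0 < C) (p : Fin 2 → ℝ) (hp : ∀ k, 0 < p k)
    (hup : ∀ w : List (Fin 2), ∀ x ∈ suppInt f, ∀ y ∈ suppInt f,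
      dist (compFam f w x) (compFam f w y) ≤ C * (w.map p).prod)
    (hlow : ∀ w : List (Fin 2), ∃ x ∈ suppInt f, ∃ y ∈ suppInt f,
      c * (w.map p).prod ≤ dist (compFam f w x) (compFam f w y)) :
    pressure f s = Real.log (∑ k, p k ^ s) := by
  have hP : ∀ w : List (Fin 2), 0 < (w.map p).prod := by
    intro w
    induction w with
    | nil => simp
    | cons a t ih => simpa using mul_pos (hp a) ih
  set L := Real.log (∑ k, p k ^ s) with hL
  have hSpos : 0 < ∑ k, p k ^ s :=
    Finset.sum_pos (fun k _ => Real.rpow_pos_of_pos (hp k) s) Finset.univ_nonempty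
  have hd1 : ∀ w : List (Fin 2), Metric.diam (compFam f w '' suppInt f) ≤ C * (w.map p).prod := by
    intro w
    apply Metric.diam_le_of_forall_dist_le (mul_pos hC (hP w)).le
    rintro _ ⟨x, hx, rfl⟩ _ ⟨y, hy, rfl⟩
    exact hup w x hx y hy
  have hd2 : ∀ w : List (Fin 2), c * (w.map p).prod ≤ Metric.diam (compFam f w '' suppInt f) := by
    intro w
    obtain ⟨x, hx, y, hy, h⟩ := hlow w
    refine h.trans (Metric.dist_le_diam_of_mem ?_ (mem_image_of_mem _ hx) (mem_image_of_mem _ hy))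
    rw [Metric.isBounded_iff]
    refine ⟨C * (w.map p).prod, ?_⟩
    rintro _ ⟨x, hx, rfl⟩ _ ⟨y, hy, rfl⟩
    exact hup w x hx y hy
  have hsum : ∀ (n : ℕ) (c : ℝ), 0 < c → ∑ w : Fin n → Fin 2, (c * ((List.ofFn w).map p).prod) ^ s
      = c ^ s * (∑ k, p k ^ s) ^ n := by
    intro n c hc
    rw [Fintype.sum_pow, Finset.mul_sum]
    refine Finset.sum_congr rfl fun w _ => ?_
    rw [Real.mul_rpow hc.le (hP _).le, List.map_ofFn, List.prod_ofFn,
      Real.finsetProd_rpow _ _ (fun i _ => (hp _).le)]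
    rfl
  have hlog : ∀ (n : ℕ) (c : ℝ), 0 < c → Real.log (c ^ s * (∑ k, p k ^ s) ^ n)
      = s * Real.log c + n * L := by
    intro n c hc
    rw [Real.log_mul (Real.rpow_pos_of_pos hc s).ne' (pow_pos hSpos n).ne', Real.log_rpow hc,
      Real.log_pow]
  have hlim : ∀ c : ℝ, Tendsto (fun n : ℕ => (n : ℝ)⁻¹ * (s * Real.log c + n * L)) atTop
      (nhds L) := by
    intro c
    have h1 : Tendsto (fun n : ℕ => (n : ℝ)⁻¹ * (s * Real.log c) + L) atTop (nhds L) := by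
      simpa using (tendsto_inv_atTop_nhds_zero_nat (𝕜 := ℝ)).mul_const (s * Real.log c)
        |>.add_const L
    refine h1.congr' ?_
    filter_upwards [eventually_gt_atTop 0] with n hn
    have : (n : ℝ) ≠ 0 := by positivity
    field_simp
  unfold pressure
  refine Tendsto.limsup_eq (tendsto_of_tendsto_of_tendsto_of_le_of_le (hlim c) (hlim C) ?_ ?_)
  · intro n
    refine mul_le_mul_of_nonneg_left ?_ (by positivity)
    rw [← hlog n c hc, ← hsum n c hc]
    refine Real.log_le_log ?_ ?_
    · exact Finset.sum_pos (fun w _ => Real.rpow_pos_of_pos (mul_pos hc (hP _)) s)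
        Finset.univ_nonempty
    · exact Finset.sum_le_sum fun w _ =>
        Real.rpow_le_rpow (mul_pos hc (hP _)).le (hd2 _) hs
  · intro n
    refine mul_le_mul_of_nonneg_left ?_ (by positivity)
    rw [← hlog n C hC, ← hsum n C hC]
    refine Real.log_le_log ?_ ?_
    · exact Finset.sum_pos (fun w _ => Real.rpow_pos_of_pos
        ((mul_pos hc (hP _)).trans_le (hd2 _)) s) Finset.univ_nonempty
    · exact Finset.sum_le_sum fun w _ =>
        Real.rpow_le_rpow Metric.diam_nonneg (hd1 _) hs

theorem suppInt_F : suppInt (![g1, fun x => x / 3] : Fin 2 → ℝ → ℝ) = Icc (-(1/2)) (1/2) := by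
  have h : ∃ φ : ℝ, ∀ k, (![g1, fun x => x / 3] : Fin 2 → ℝ → ℝ) k φ = φ :=
    ⟨0, by intro k; fin_cases k <;> simp [g1]⟩
  have h0 : h.choose = 0 := by
    have := h.choose_spec 1
    simp only [Matrix.cons_val_one, Matrix.cons_val_fin_one] at this
    linarith
  unfold suppInt
  rw [dif_pos h, h0]
  norm_num

theorem suppInt_Feps (ε : ℝ) (hε : 0 < ε) :
    suppInt (![g1, fun x => x / 3 + ε] : Fin 2 → ℝ → ℝ) = Icc 0 (3 / 2 * ε) := by
  have hn : ¬ ∃ φ : ℝ, ∀ k, (![g1, fun x => x / 3 + ε] : Fin 2 → ℝ → ℝ) k φ = φ := by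
    rintro ⟨φ, h⟩
    have h0 := h 0
    have h1 := h 1
    simp only [Matrix.cons_val_zero, Matrix.cons_val_one, Matrix.cons_val_fin_one, g1] at h0 h1
    split_ifs at h0 <;> linarith
  unfold suppInt
  rw [dif_neg hn]
  apply Subset.antisymm
  · apply sInter_subset_of_mem
    refine ⟨⟨0, by constructor <;> linarith⟩, ⟨_, _, rfl⟩, ?_⟩
    intro k
    rintro _ ⟨x, ⟨hx0, hx1⟩, rfl⟩
    fin_cases k
    · simp only [Fin.zero_eta, Matrix.cons_val_zero, g1]
      split_ifs <;> constructor <;> linarith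
    · simp only [Fin.mk_one, Matrix.cons_val_one, Matrix.cons_val_fin_one]
      constructor <;> linarith
  · apply subset_sInter
    rintro _ ⟨hne, ⟨a, b, rfl⟩, hk⟩
    have hab : a ≤ b := nonempty_Icc.1 hne
    have ha0 := hk 0 (mem_image_of_mem _ (left_mem_Icc.2 hab))
    have hb1 := hk 1 (mem_image_of_mem _ (right_mem_Icc.2 hab))
    simp only [Matrix.cons_val_zero, Matrix.cons_val_one, Matrix.cons_val_fin_one, g1,
      mem_Icc] at ha0 hb1
    apply Icc_subset_Icc
    · split_ifs at ha0 <;> linarith [ha0.1]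
    · linarith [hb1.2]

theorem pressure_F (s : ℝ) (hs : 0 ≤ s) :
    pressure (![g1, fun x => x / 3] : Fin 2 → ℝ → ℝ) s
      = Real.log ((2 / 5 : ℝ) ^ s + (1 / 3 : ℝ) ^ s) := by
  set p : Fin 2 → ℝ := ![2 / 5, 1 / 3] with hpdef
  have hp : ∀ k, 0 < p k := by intro k; fin_cases k <;> norm_num [p]
  have hP : ∀ w : List (Fin 2), 0 < (w.map p).prod := by
    intro w
    induction w with
    | nil => simp
    | cons a t ih => simpa using mul_pos (hp a) ih
  have hneg : ∀ w : List (Fin 2), ∀ x ≤ 0,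
      compFam (![g1, fun x => x / 3] : Fin 2 → ℝ → ℝ) w x = (w.map p).prod * x := by
    intro w x hx
    induction w with
    | nil => simp [compFam]
    | cons a t ih =>
      have : compFam (![g1, fun x => x / 3] : Fin 2 → ℝ → ℝ) (a :: t) x
        = (![g1, fun x => x / 3] : Fin 2 → ℝ → ℝ) a (compFam ![g1, fun x => x / 3] t x) := rfl
      rw [this, ih]
      have h1 : (t.map p).prod * x ≤ 0 := mul_nonpos_of_nonneg_of_nonpos (hP t).le hx
      fin_cases a
      · rw [List.map_cons, List.prod_cons, mul_assoc]
        generalize (t.map p).prod * x = y at h1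
        simp [g1, h1, p]
      · simp [p]; ring
  have hpos : ∀ w : List (Fin 2), ∀ x, 0 ≤ x →
      0 ≤ compFam (![g1, fun x => x / 3] : Fin 2 → ℝ → ℝ) w x ∧
      compFam (![g1, fun x => x / 3] : Fin 2 → ℝ → ℝ) w x ≤ (w.map p).prod * x := by
    intro w x hx
    induction w with
    | nil => simp [compFam, hx]
    | cons a t ih =>
      have : compFam (![g1, fun x => x / 3] : Fin 2 → ℝ → ℝ) (a :: t) x
        = (![g1, fun x => x / 3] : Fin 2 → ℝ → ℝ) a (compFam ![g1, fun x => x / 3] t x) := rfl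
      rw [this]
      obtain ⟨h1, h2⟩ := ih
      generalize compFam (![g1, fun x => x / 3] : Fin 2 → ℝ → ℝ) t x = y at h1 h2
      rw [List.map_cons, List.prod_cons, mul_assoc]
      fin_cases a
      · simp only [Fin.zero_eta, Matrix.cons_val_zero, g1, p]
        split_ifs <;> constructor <;> linarith
      · simp only [Fin.mk_one, Matrix.cons_val_one, Matrix.cons_val_fin_one, p]
        constructor <;> linarith
  have := pressure_eq_aux (![g1, fun x => x / 3]) s hs (1/2) 1 (by norm_num) (by norm_num) p hp
    ?_ ?_
  · rw [this, Fin.sum_univ_two]; simp [p]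
  · rw [suppInt_F]
    have key : ∀ w : List (Fin 2), ∀ x ∈ Icc (-(1/2) : ℝ) (1/2),
        |compFam (![g1, fun x => x / 3] : Fin 2 → ℝ → ℝ) w x| ≤ (w.map p).prod / 2 := by
      rintro w x ⟨hx1, hx2⟩
      have := hP w
      rw [abs_le]
      rcases le_total x 0 with h | h
      · rw [hneg w x h]
        constructor <;> nlinarith
      · have := hpos w x h
        constructor <;> nlinarith
    intro w x hx y hy
    rw [Real.dist_eq]
    have h1 := key w x hx
    have h2 := key w y hy
    have := abs_sub (compFam (![g1, fun x => x / 3] : Fin 2 → ℝ → ℝ) w x)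
      (compFam (![g1, fun x => x / 3] : Fin 2 → ℝ → ℝ) w y)
    linarith
  · rw [suppInt_F]
    intro w
    refine ⟨-(1/2), by norm_num, 0, by norm_num, ?_⟩
    rw [hneg w _ (by norm_num), hneg w 0 le_rfl, Real.dist_eq]
    have := neg_abs_le ((List.map p w).prod * -(1 / 2) - (List.map p w).prod * 0)
    linarith

theorem pressure_Feps (ε : ℝ) (hε : 0 < ε) (s : ℝ) (hs : 0 ≤ s) :
    pressure (![g1, fun x => x / 3 + ε] : Fin 2 → ℝ → ℝ) s
      = Real.log ((1 / 3 : ℝ) ^ s + (1 / 5 : ℝ) ^ s) := by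
  set p : Fin 2 → ℝ := ![1 / 5, 1 / 3] with hpdef
  have hp : ∀ k, 0 < p k := by intro k; fin_cases k <;> norm_num [p]
  have hP : ∀ w : List (Fin 2), 0 < (w.map p).prod := by
    intro w
    induction w with
    | nil => simp
    | cons a t ih => simpa using mul_pos (hp a) ih
  have hform : ∀ w : List (Fin 2), ∃ d : ℝ, 0 ≤ d ∧ ∀ x, 0 ≤ x →
      compFam (![g1, fun x => x / 3 + ε] : Fin 2 → ℝ → ℝ) w x = (w.map p).prod * x + d := by
    intro w
    induction w with
    | nil => exact ⟨0, le_rfl, by simp [compFam]⟩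
    | cons a t ih =>
      obtain ⟨d, hd, h⟩ := ih
      have hc : ∀ x, compFam (![g1, fun x => x / 3 + ε] : Fin 2 → ℝ → ℝ) (a :: t) x
        = (![g1, fun x => x / 3 + ε] : Fin 2 → ℝ → ℝ) a
          (compFam ![g1, fun x => x / 3 + ε] t x) := fun _ => rfl
      fin_cases a
      · refine ⟨d / 5, by positivity, fun x hx => ?_⟩
        rw [hc, h x hx, List.map_cons, List.prod_cons, mul_assoc]
        have h1 : 0 ≤ (t.map p).prod * x := mul_nonneg (hP t).le hx
        simp only [Fin.zero_eta, Matrix.cons_val_zero, g1, p] at h1 ⊢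
        split_ifs <;> linarith
      · refine ⟨d / 3 + ε, by positivity, fun x hx => ?_⟩
        rw [hc, h x hx, List.map_cons, List.prod_cons, mul_assoc]
        simp only [Fin.mk_one, Matrix.cons_val_one, Matrix.cons_val_fin_one, p]
        ring
  have := pressure_eq_aux (![g1, fun x => x / 3 + ε]) s hs (3/2*ε) (3/2*ε) (by positivity)
    (by positivity) p hp ?_ ?_
  · rw [this, Fin.sum_univ_two, add_comm]; simp [p]
  · rw [suppInt_Feps ε hε]
    rintro w x ⟨hx1, hx2⟩ y ⟨hy1, hy2⟩
    obtain ⟨d, hd, h⟩ := hform w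
    have := hP w
    rw [h x hx1, h y hy1, Real.dist_eq, abs_le]
    constructor <;> nlinarith
  · rw [suppInt_Feps ε hε]
    intro w
    obtain ⟨d, hd, h⟩ := hform w
    have hb : 0 ≤ 3/2*ε := by positivity
    refine ⟨3/2*ε, ⟨hb, le_rfl⟩, 0, ⟨le_rfl, hb⟩, ?_⟩
    rw [h _ hb, h 0 le_rfl, Real.dist_eq]
    refine le_trans (le_of_eq ?_) (le_abs_self _)
    ring

/-- **Example pm49.** Let `F = {f₁, x ↦ x/3}` with natural pressure `Φ`.
Then (i) for every `s > 0`, `Φ(s) > log ((1/3)ˢ + (1/5)ˢ)`; (ii) consequently the natural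
dimension `s_F` of `F` is strictly greater than the unique `r > 0` with
`(1/3)ʳ + (1/5)ʳ = 1`; and (iii) for every `ε > 0` the perturbed CPLIFS
`F̂_ε = {f₁, x ↦ x/3 + ε}` has natural dimension exactly `r`, so the natural dimension is
not continuous at `F` (the gap `s_F - r` is independent of `ε`). -/
theorem example_natural_dimension_discontinuous :
    (∀ s : ℝ, 0 < s →
      Real.log ((1 / 3 : ℝ) ^ s + (1 / 5 : ℝ) ^ s) <
        pressure (![g1, fun x => x / 3] : Fin 2 → ℝ → ℝ) s) ∧
    (∀ sF : ℝ, 0 ≤ sF →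
      pressure (![g1, fun x => x / 3] : Fin 2 → ℝ → ℝ) sF = 0 →
      ∀ r : ℝ, 0 < r → (1 / 3 : ℝ) ^ r + (1 / 5 : ℝ) ^ r = 1 → r < sF) ∧
    (∀ ε : ℝ, 0 < ε → ∀ s : ℝ, 0 ≤ s →
      pressure (![g1, fun x => x / 3 + ε] : Fin 2 → ℝ → ℝ) s = 0 →
      (1 / 3 : ℝ) ^ s + (1 / 5 : ℝ) ^ s = 1) := by
  refine ⟨?_, ?_, ?_⟩
  · intro s hs
    rw [pressure_F s hs.le]
    apply Real.log_lt_log (by positivity)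
    have : (1/5 : ℝ) ^ s < (2/5 : ℝ) ^ s := Real.rpow_lt_rpow (by norm_num) (by norm_num) hs
    linarith
  · intro sF h0 h r hr hr1
    rw [pressure_F sF h0] at h
    have h1 : (2 / 5 : ℝ) ^ sF + (1 / 3 : ℝ) ^ sF = 1 :=
      Real.eq_one_of_pos_of_log_eq_zero (by positivity) h
    by_contra hle
    push Not at hle
    have h3 : (1/3 : ℝ) ^ r ≤ (1/3 : ℝ) ^ sF :=
      Real.rpow_le_rpow_of_exponent_ge (by norm_num) (by norm_num) hle
    have h5 : (2/5 : ℝ) ^ r ≤ (2/5 : ℝ) ^ sF :=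
      Real.rpow_le_rpow_of_exponent_ge (by norm_num) (by norm_num) hle
    have h6 : (1/5 : ℝ) ^ r < (2/5 : ℝ) ^ r := Real.rpow_lt_rpow (by norm_num) (by norm_num) hr
    linarith
  · intro ε hε s hs h
    rw [pressure_Feps ε hε s hs] at h
    exact Real.eq_one_of_pos_of_log_eq_zero (by positivity) h

end
end
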